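/- arXiv:2402.15574 — 6 statements merged into one kernel-verified Lean document; each statement's English description precedes it below -/
import Mathlib

section
/- Let (A, α, γ) be a graded C*-dynamical system with Z₂-crossed product 𝐀 = A ⋊_γ ℤ₂ carrying the extended dynamics 𝛂, and let β ∈ ℝ. Then any (𝛂, β)-KMS state 𝛚 on 𝐀 restricts to a γ-invariant (α, β)-KMS state ω = 𝛚|_{A⊕0} on A. -/
open scoped InnerProductSpace ComplexOrder

noncomputable section

/-- A strongly continuous one-parameter group of *-automorphisms of a unital C*-algebra. -/
structure Dynamics (A : Type*) [CStarAlgebra A] where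
  α : ℝ → A ≃⋆ₐ[ℂ] A
  α_zero : ∀ a, α 0 a = a
  α_add : ∀ s t a, α (s + t) a = α s (α t a)
  α_cont : ∀ a, Continuous fun t => α t a

variable {A : Type*} [CStarAlgebra A]

/-- `f` is the entire analytic extension of `t ↦ α_t a`; an element admitting such an
extension is an entire analytic element for the dynamics. -/
def Dynamics.IsAnalyticExt (d : Dynamics A) (a : A) (f : ℂ → A) : Prop :=
  Differentiable ℂ f ∧ ∀ t : ℝ, f (t : ℂ) = d.α t a

/-- A state: positive normalized linear functional. -/
def IsState (ω : A → ℂ) : Prop :=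
  IsLinearMap ℂ ω ∧ (∀ a : A, 0 ≤ ω (star a * a)) ∧ ω 1 = 1

/-- The `(α, β)`-KMS condition: `ω (a * α_{iβ}(b)) = ω (b * a)` for entire analytic `a, b`. -/
def Dynamics.IsKMS (d : Dynamics A) (β : ℝ) (ω : A → ℂ) : Prop :=
  IsState ω ∧ ∀ a b : A, ∀ fa fb : ℂ → A, d.IsAnalyticExt a fa → d.IsAnalyticExt b fb →
    ω (a * fb (Complex.I * β)) = ω (b * a)

/-- A graded C*-dynamical system: dynamics plus a commuting involutive grading. -/
structure GradedDyn (A : Type*) [CStarAlgebra A] extends Dynamics A where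
  γ : A ≃⋆ₐ[ℂ] A
  γ_invol : ∀ a, γ (γ a) = a
  γ_comm : ∀ t a, γ (α t a) = α t (γ a)

/-- The `γ`-twisted `(α, β)`-KMS condition: `ρ (a * α_{iβ}(b)) = ρ (b * γ a)`. -/
def Dynamics.IsTwistedKMS (d : Dynamics A) (γ : A ≃⋆ₐ[ℂ] A) (β : ℝ) (ρ : A → ℂ) : Prop :=
  IsLinearMap ℂ ρ ∧ ∀ a b : A, ∀ fa fb : ℂ → A, d.IsAnalyticExt a fa → d.IsAnalyticExt b fb →
    ρ (a * fb (Complex.I * β)) = ρ (b * γ a)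

/-- Hermitian functional: `ρ(a*) = conj (ρ a)`. -/
def IsHermitian (ρ : A → ℂ) : Prop := ∀ a, ρ (star a) = starRingEnd ℂ (ρ a)

/-- `ρ` is dominated by `ω`: `|ρ(a* b)|² ≤ ω(a* a) ω(b* b)`. -/
def Dominated (ω ρ : A → ℂ) : Prop :=
  ∀ a b : A, (‖ρ (star a * b)‖ : ℂ) ^ 2 ≤ ω (star a * a) * ω (star b * b)

/-- The set `F_β(A, α, γ, ω)`: hermitian `γ`-twisted `(α,β)`-KMS functionals dominated by `ω`. -/
def TwistedKMSDom (d : Dynamics A) (γ : A ≃⋆ₐ[ℂ] A) (β : ℝ) (ω ρ : A → ℂ) : Prop :=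
  d.IsTwistedKMS γ β ρ ∧ IsHermitian ρ ∧ Dominated ω ρ

/-- Product of the `ℤ₂`-crossed product `A ⋊_γ ℤ₂` realized on `A ⊕ A`. -/
def cpMul (γ : A ≃⋆ₐ[ℂ] A) (p q : A × A) : A × A :=
  (p.1 * q.1 + p.2 * γ q.2, p.1 * q.2 + p.2 * γ q.1)

/-- Involution of the crossed product. -/
def cpStar (γ : A ≃⋆ₐ[ℂ] A) (p : A × A) : A × A := (star p.1, γ (star p.2))

/-- Unit of the crossed product. -/
def cpOne : A × A := (1, 0)

/-- A state on the crossed product. -/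
def cpIsState (γ : A ≃⋆ₐ[ℂ] A) (W : A × A → ℂ) : Prop :=
  IsLinearMap ℂ W ∧ (∀ p : A × A, 0 ≤ W (cpMul γ (cpStar γ p) p)) ∧ W (cpOne : A × A) = 1

/-- Entire analytic extension for the componentwise extended dynamics `𝛂` on `A ⊕ A`. -/
def cpIsAnalyticExt (d : Dynamics A) (p : A × A) (f : ℂ → A × A) : Prop :=
  Differentiable ℂ f ∧ ∀ t : ℝ, f (t : ℂ) = (d.α t p.1, d.α t p.2)

/-- `(𝛂, β)`-KMS states of the crossed product `A ⋊_γ ℤ₂`. -/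
def cpIsKMS (d : Dynamics A) (γ : A ≃⋆ₐ[ℂ] A) (β : ℝ) (W : A × A → ℂ) : Prop :=
  cpIsState γ W ∧ ∀ p q : A × A, ∀ fp fq : ℂ → A × A,
    cpIsAnalyticExt d p fp → cpIsAnalyticExt d q fq →
    W (cpMul γ p (fq (Complex.I * β))) = W (cpMul γ q p)


open MeasureTheory Filter Topology in
theorem aux_gauss_diff {E : Type*} [NormedAddCommGroup E] [NormedSpace ℂ E]
    (F : ℝ → E) (hF : Continuous F) (M : ℝ) (hM : ∀ s, ‖F s‖ ≤ M) :
    Differentiable ℂ (fun w : ℂ => ∫ s : ℝ, Complex.exp (-((s : ℂ) - w) ^ 2) • F s) := by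
  intro w₀
  set R : ℝ := ‖w₀‖ + 1 with hR
  have hR0 : 0 ≤ R := by positivity
  have hM0 : 0 ≤ M := (norm_nonneg _).trans (hM 0)
  set C : ℝ := (2 * R + 1) ^ 2 / 2 + R ^ 2 + R with hC
  have hexp : ∀ (s : ℝ) (w : ℂ), ‖w‖ ≤ R →
      ‖Complex.exp (-((s : ℂ) - w) ^ 2)‖ ≤ Real.exp (-s ^ 2 + 2 * |s| * R + R ^ 2) := by
    intro s w hw
    rw [Complex.norm_exp]
    apply Real.exp_le_exp.2
    have h1 : (-((s : ℂ) - w) ^ 2).re = -s ^ 2 + 2 * s * w.re - w.re ^ 2 + w.im ^ 2 := by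
      simp [pow_two]; ring
    rw [h1]
    have h2 : |w.re| ≤ R := (Complex.abs_re_le_norm w).trans hw
    have h3 : |w.im| ≤ R := (Complex.abs_im_le_norm w).trans hw
    have h4 : s * w.re ≤ |s| * R := by
      calc s * w.re ≤ |s * w.re| := le_abs_self _
        _ = |s| * |w.re| := abs_mul _ _
        _ ≤ |s| * R := by gcongr
    have h5 : w.im ^ 2 ≤ R ^ 2 := by
      rw [← sq_abs w.im]; gcongr
    nlinarith [sq_nonneg w.re]
  have hquad : ∀ s : ℝ, (|s| + R) + (-s ^ 2 + 2 * |s| * R + R ^ 2) ≤ -(1 / 2) * s ^ 2 + C := by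
    intro s
    rw [← sq_abs s]
    nlinarith [sq_nonneg (|s| - (2 * R + 1))]
  have hbi : Integrable (fun s : ℝ => 2 * Real.exp C * M * Real.exp (-(1 / 2) * s ^ 2)) :=
    (integrable_exp_neg_mul_sq (by norm_num)).const_mul _
  have hcont : ∀ w : ℂ, Continuous fun s : ℝ => Complex.exp (-((s : ℂ) - w) ^ 2) • F s := by
    intro w; fun_prop
  have key := hasDerivAt_integral_of_dominated_loc_of_deriv_le (μ := (volume : Measure ℝ))
    (F := fun (w : ℂ) (s : ℝ) => Complex.exp (-((s : ℂ) - w) ^ 2) • F s)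
    (F' := fun (w : ℂ) (s : ℝ) =>
      (Complex.exp (-((s : ℂ) - w) ^ 2) * (2 * ((s : ℂ) - w))) • F s)
    (x₀ := w₀) (s := Metric.ball w₀ 1)
    (bound := fun s : ℝ => 2 * Real.exp C * M * Real.exp (-(1 / 2) * s ^ 2))
    (Metric.ball_mem_nhds _ one_pos)
    (Eventually.of_forall fun w => (hcont w).aestronglyMeasurable)
    (by
      refine hbi.mono' (hcont w₀).aestronglyMeasurable (Eventually.of_forall fun s => ?_)
      rw [norm_smul]
      calc _ ≤ Real.exp (-s ^ 2 + 2 * |s| * R + R ^ 2) * M := by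
            gcongr
            · exact hexp s w₀ (by linarith)
            · exact hM s
        _ ≤ Real.exp (-(1 / 2) * s ^ 2 + C) * M := by
            refine mul_le_mul_of_nonneg_right (Real.exp_le_exp.2 ?_) hM0
            have := hquad s
            have := abs_nonneg s
            linarith
        _ ≤ _ := by
            rw [Real.exp_add]
            have := mul_nonneg (mul_nonneg (Real.exp_pos (-(1 / 2) * s ^ 2)).le
              (Real.exp_pos C).le) hM0
            linarith)
    (by
      apply Continuous.aestronglyMeasurable
      fun_prop)
    (Eventually.of_forall fun s w hw => by
      have hw' : ‖w‖ ≤ R := by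
        have h1 : ‖w - w₀‖ < 1 := by simpa [dist_eq_norm] using hw
        have h2 : ‖w‖ ≤ ‖w - w₀‖ + ‖w₀‖ := by simpa using norm_add_le (w - w₀) w₀
        linarith
      rw [norm_smul, norm_mul, norm_mul]
      have h3 : ‖(s : ℂ) - w‖ ≤ Real.exp (|s| + R) := by
        have h4 := norm_sub_le (s : ℂ) w
        rw [Complex.norm_real, Real.norm_eq_abs] at h4
        have := Real.add_one_le_exp (|s| + R)
        linarith
      calc _ ≤ Real.exp (-s ^ 2 + 2 * |s| * R + R ^ 2) * (2 * Real.exp (|s| + R)) * M := by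
            gcongr
            · exact hexp s w hw'
            · simp
            · exact hM s
        _ = 2 * M * Real.exp ((|s| + R) + (-s ^ 2 + 2 * |s| * R + R ^ 2)) := by
            rw [Real.exp_add (|s| + R)]; ring
        _ ≤ 2 * M * Real.exp (-(1 / 2) * s ^ 2 + C) := by
            exact mul_le_mul_of_nonneg_left (Real.exp_le_exp.2 (hquad s)) (by positivity)
        _ = _ := by rw [Real.exp_add]; ring)
    hbi
    (Eventually.of_forall fun s w _ => by
      have h1 : HasDerivAt (fun w : ℂ => -((s : ℂ) - w) ^ 2) (2 * ((s : ℂ) - w)) w := by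
        have := (((hasDerivAt_id w).const_sub (s : ℂ)).pow 2).neg
        refine this.congr_deriv ?_
        simp
      exact h1.cexp.smul_const (F s))
  exact key.2.differentiableAt

theorem aux_state_cont {A : Type*} [CStarAlgebra A] (ω : A → ℂ) (hω : IsState ω) :
    Continuous ω := by
  let _ := CStarAlgebra.spectralOrder A
  have := CStarAlgebra.spectralOrderedRing A
  let f : A →ₚ[ℂ] ℂ := PositiveLinearMap.mk₀ (IsLinearMap.mk' ω hω.1) (fun x hx => by
    obtain ⟨y, rfl⟩ := CStarAlgebra.nonneg_iff_eq_star_mul_self.1 hx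
    exact hω.2.1 y)
  exact map_continuous f

open MeasureTheory Filter Topology in
theorem aux_dense {A : Type*} [CStarAlgebra A] (d : Dynamics A) (a : A) :
    ∃ (u : ℕ → A) (f : ℕ → ℂ → A), (∀ n, d.IsAnalyticExt (u n) (f n)) ∧
      Tendsto u atTop (𝓝 ((∫ s : ℝ, Complex.exp (-(s : ℂ) ^ 2)) • a)) := by
  have hnorm : ∀ t (x : A), ‖d.α t x‖ = ‖x‖ := fun t x => StarAlgEquiv.norm_map (d.α t) x
  have hint : Integrable (fun s : ℝ => Complex.exp (-(s : ℂ) ^ 2)) := by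
    have := (integrable_exp_neg_mul_sq (b := 1) one_pos).ofReal (𝕜 := ℂ)
    refine this.congr (Eventually.of_forall fun s => ?_)
    simp
  have hcont : ∀ n : ℕ, Continuous fun s : ℝ => d.α (s / (n + 1)) a := fun n =>
    (d.α_cont a).comp (by fun_prop)
  have hGint : ∀ n : ℕ, Integrable fun s : ℝ => Complex.exp (-(s : ℂ) ^ 2) • d.α (s / (n + 1)) a := by
    intro n
    refine (hint.norm.mul_const ‖a‖).mono' (Continuous.aestronglyMeasurable ?_)
      (Eventually.of_forall fun s => ?_)
    · have := hcont n
      fun_prop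
    · rw [norm_smul, hnorm]
  refine ⟨fun n => ∫ s : ℝ, Complex.exp (-(s : ℂ) ^ 2) • d.α (s / (n + 1)) a,
    fun n z => ∫ s : ℝ, Complex.exp (-((s : ℂ) - (n + 1) * z) ^ 2) • d.α (s / (n + 1)) a,
    fun n => ⟨?_, fun t => ?_⟩, ?_⟩
  · exact (aux_gauss_diff (fun s : ℝ => d.α (s / (n + 1)) a) (hcont n) ‖a‖
      (fun s => (hnorm _ _).le)).comp (g := fun w : ℂ =>
        ∫ s : ℝ, Complex.exp (-((s : ℂ) - w) ^ 2) • d.α (s / (n + 1)) a)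
      (f := fun z : ℂ => ((n : ℂ) + 1) * z) (by fun_prop)
  · have hn : (n : ℝ) + 1 ≠ 0 := by positivity
    let L : A →L[ℂ] A := ⟨(d.α t).toAlgEquiv.toLinearMap,
      (AddMonoidHomClass.isometry_of_norm (d.α t) (hnorm t)).continuous⟩
    have hL : ∀ x, L x = d.α t x := fun x => rfl
    change (∫ s : ℝ, Complex.exp (-((s : ℂ) - (n + 1) * (t : ℂ)) ^ 2) • d.α (s / (n + 1)) a) = d.α t _
    rw [← hL, ← L.integral_comp_comm (hGint n),
      ← integral_add_right_eq_self (fun s : ℝ =>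
        Complex.exp (-((s : ℂ) - (n + 1) * (t : ℂ)) ^ 2) • d.α (s / (n + 1)) a)
        (((n : ℝ) + 1) * t)]
    refine integral_congr_ae (Eventually.of_forall fun s => ?_)
    simp only [map_smul, hL]
    rw [← d.α_add]
    congr 2
    · push_cast; ring_nf
    · congr 1
      field_simp
      ring
  · have h0 : ∀ s : ℝ, Tendsto (fun n : ℕ => Complex.exp (-(s : ℂ) ^ 2) • d.α (s / (n + 1)) a)
        atTop (𝓝 (Complex.exp (-(s : ℂ) ^ 2) • a)) := by
      intro s
      have h1 : Tendsto (fun n : ℕ => s / ((n : ℝ) + 1)) atTop (𝓝 0) := by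
        have := (tendsto_one_div_add_atTop_nhds_zero_nat (𝕜 := ℝ)).const_mul s
        simpa [div_eq_mul_inv] using this
      have h2 := ((d.α_cont a).tendsto 0).comp h1
      rw [d.α_zero] at h2
      exact h2.const_smul _
    rw [← integral_smul_const]
    exact tendsto_integral_of_dominated_convergence
      (fun s : ℝ => ‖Complex.exp (-(s : ℂ) ^ 2)‖ * ‖a‖)
      (fun n => (hGint n).aestronglyMeasurable) (hint.norm.mul_const _)
      (fun n => Eventually.of_forall fun s => by rw [norm_smul, hnorm])
      (Eventually.of_forall h0)

/-- Any `(𝛂, β)`-KMS state `𝛚` on the `ℤ₂`-crossed product `𝐀 = A ⋊_γ ℤ₂`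
(with the extended dynamics `𝛂`) restricts to a `γ`-invariant `(α, β)`-KMS state
`ω = 𝛚|_{A⊕0}` on `A`. -/
theorem kms_state_of_crossed_product_restricts {A : Type*} [CStarAlgebra A]
    (S : GradedDyn A) (β : ℝ) (W : A × A → ℂ)
    (hW : cpIsKMS S.toDynamics S.γ β W) :
    S.toDynamics.IsKMS β (fun a => W (a, 0)) ∧ ∀ a : A, W (S.γ a, 0) = W (a, 0) := by
  obtain ⟨⟨hlin, hpos, hone⟩, hkms⟩ := hW
  have hlin' : IsLinearMap ℂ (fun a : A => W (a, 0)) := by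
    constructor
    · intro x y
      have := hlin.map_add (x, 0) (y, 0)
      simpa using this
    · intro c x
      have := hlin.map_smul c (x, 0)
      simpa using this
  have hst : IsState (fun a : A => W (a, 0)) := by
    refine ⟨hlin', fun a => ?_, hone⟩
    have := hpos (a, 0)
    simpa [cpMul, cpStar] using this
  have hext : ∀ (a : A) (f : ℂ → A), S.toDynamics.IsAnalyticExt a f →
      cpIsAnalyticExt S.toDynamics (a, 0) (fun z => (f z, 0)) := by
    intro a f hf
    exact ⟨hf.1.prodMk (differentiable_const _), fun t => by simp [hf.2 t]⟩
  have hext2 : ∀ (a : A) (f : ℂ → A), S.toDynamics.IsAnalyticExt a f →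
      cpIsAnalyticExt S.toDynamics (0, a) (fun z => (0, f z)) := by
    intro a f hf
    exact ⟨(differentiable_const _).prodMk hf.1, fun t => by simp [hf.2 t]⟩
  refine ⟨⟨hst, fun a b fa fb ha hb => ?_⟩, fun a => ?_⟩
  · have := hkms _ _ _ _ (hext a fa ha) (hext b fb hb)
    simpa [cpMul] using this
  · have hone' : S.toDynamics.IsAnalyticExt 1 (fun _ => 1) :=
      ⟨differentiable_const _, fun t => by simp⟩
    have han : ∀ (x : A) (f : ℂ → A), S.toDynamics.IsAnalyticExt x f →
        W (S.γ x, 0) = W (x, 0) := by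
      intro x f hx
      have := hkms _ _ _ _ (hext2 x f hx) (hext2 1 _ hone')
      simpa [cpMul] using this.symm
    have hc := aux_state_cont _ hst
    have hγ : Continuous S.γ :=
      (AddMonoidHomClass.isometry_of_norm S.γ (fun x => StarAlgEquiv.norm_map S.γ x)).continuous
    obtain ⟨u, f, huf, hu⟩ := aux_dense S.toDynamics a
    have h1 := (hc.tendsto _).comp hu
    have h2 := ((hc.comp hγ).tendsto _).comp hu
    have h3 := tendsto_nhds_unique (h2.congr fun n => han _ _ (huf n)) h1
    have hI : (∫ s : ℝ, Complex.exp (-(s : ℂ) ^ 2)) ≠ 0 := by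
      have h4 := integral_gaussian_complex (b := 1) (by simp)
      simp only [neg_mul, one_mul, div_one] at h4
      rw [h4]
      simp [Complex.cpow_eq_zero_iff, Real.pi_ne_zero]
    simp only [Function.comp, map_smul] at h3
    rw [hlin'.map_smul, hlin'.map_smul] at h3
    exact smul_right_injective ℂ hI h3

end
end

section
/- Let (A, α, γ) be a graded C*-dynamical system with Z₂-crossed product 𝐀 = A ⋊_γ ℤ₂ carrying the extended dynamics 𝛂, and let β ∈ ℝ. For every γ-invariant (α, β)-KMS state ω on A, the state 𝛚^can := ω ∘ E, where E : 𝐀 → A, (a,b) ↦ a is the canonical conditional expectation, is an (𝛂, β)-KMS state on 𝐀 extending ω. In particular every γ-invariant (α, β)-KMS state on A admits at least one KMS extension to the crossed product. -/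
open scoped InnerProductSpace ComplexOrder

noncomputable section

variable {A : Type*} [CStarAlgebra A]

/-- For every `γ`-invariant `(α, β)`-KMS state `ω` on `A`, the state
`𝛚^can := ω ∘ E` (with `E : A ⋊_γ ℤ₂ → A, (a,b) ↦ a` the canonical conditional
expectation) is an `(𝛂, β)`-KMS state on the crossed product extending `ω`; in
particular every `γ`-invariant `(α, β)`-KMS state on `A` admits at least one KMS
extension to the crossed product. -/
theorem canonical_extension_is_kms {A : Type*} [CStarAlgebra A]
    (S : GradedDyn A) (β : ℝ) (ω : A → ℂ)
    (hω : S.toDynamics.IsKMS β ω) (hinv : ∀ a, ω (S.γ a) = ω a) :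
    cpIsKMS S.toDynamics S.γ β (fun p : A × A => ω p.1) ∧
    (∀ a : A, (fun p : A × A => ω p.1) (a, 0) = ω a) ∧
    ∃ W : A × A → ℂ, cpIsKMS S.toDynamics S.γ β W ∧ ∀ a : A, W (a, 0) = ω a := by
  obtain ⟨⟨hlin, hpos, hone⟩, hkms⟩ := hω
  have hmain : cpIsKMS S.toDynamics S.γ β (fun p : A × A => ω p.1) := by
    refine ⟨⟨⟨fun p q => hlin.map_add _ _, fun c p => hlin.map_smul _ _⟩, ?_, hone⟩, ?_⟩
    · intro p
      have h : ω (S.γ (star p.2) * S.γ p.2) = ω (star p.2 * p.2) := by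
        rw [← map_mul, hinv]
      simp only [cpMul, cpStar]
      rw [hlin.map_add, h]
      exact add_nonneg (hpos _) (hpos _)
    · intro p q fp fq hp hq
      have hcont : Continuous S.γ :=
        AddMonoidHomClass.continuous_of_bound S.γ 1
          (fun x => by simpa using NonUnitalStarAlgHom.norm_apply_le S.γ x)
      let L : A →L[ℂ] A :=
        { toFun := S.γ
          map_add' := map_add S.γ
          map_smul' := fun c x => map_smul S.γ c x
          cont := hcont }
      have p1 : S.toDynamics.IsAnalyticExt p.1 (fun z => (fp z).1) :=
        ⟨hp.1.fst, fun t => by simp [hp.2 t]⟩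
      have p2 : S.toDynamics.IsAnalyticExt p.2 (fun z => (fp z).2) :=
        ⟨hp.1.snd, fun t => by simp [hp.2 t]⟩
      have q1 : S.toDynamics.IsAnalyticExt q.1 (fun z => (fq z).1) :=
        ⟨hq.1.fst, fun t => by simp [hq.2 t]⟩
      have q2 : S.toDynamics.IsAnalyticExt (S.γ q.2) (fun z => S.γ (fq z).2) :=
        ⟨L.differentiable.comp hq.1.snd, fun t => by simp [hq.2 t, S.γ_comm]⟩
      have e1 := hkms _ _ _ _ p1 q1
      have e2 := hkms _ _ _ _ p2 q2
      have e3 : ω (q.2 * S.γ p.2) = ω (S.γ q.2 * p.2) := by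
        rw [← hinv (q.2 * S.γ p.2), map_mul, S.γ_invol]
      simp only [cpMul]
      rw [hlin.map_add, hlin.map_add, e3, ← e1, ← e2]
  exact ⟨hmain, fun _ => rfl, _, hmain, fun _ => rfl⟩

end
end

section
/- Let H be a Hilbert space, A ⊆ B(H) a simple unital C*-algebra, and G a selfadjoint unitary on H satisfying G A G = A and G ∉ A. Then the C*-algebra C*(A, G) generated by A and G is isomorphic to the crossed product A ⋊_{Ad_G} ℤ₂, via the map (a, b) ↦ a + bG. -/
open scoped InnerProductSpace ComplexOrder

noncomputable section

variable {A : Type*} [CStarAlgebra A]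

/-- Let `A ⊆ B(H)` be a simple unital C*-algebra (realized here via an
injective unital *-homomorphism `ι : A → B(H)`), and `G` a selfadjoint unitary on `H`
with `G A G = A` (i.e. `Ad_G` induces an automorphism `γ` of `A`) and `G ∉ A`. Then
`(a, b) ↦ a + b G` is an isomorphism from the crossed product `A ⋊_{Ad_G} ℤ₂` onto the
C*-algebra `C*(A, G)` generated by `A` and `G`: it is injective, multiplicative and
star-preserving for the crossed-product operations, unital, and its range is
`C*(A, G)`. -/
theorem crossed_product_iso_CStar_of_simple
    {Hs : Type*} [NormedAddCommGroup Hs] [InnerProductSpace ℂ Hs] [CompleteSpace Hs]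
    (ι : A →⋆ₐ[ℂ] (Hs →L[ℂ] Hs)) (hι : Function.Injective ι)
    (hclosed : IsClosed (Set.range ι))
    (hsimple : ∀ I : Ideal A, IsClosed (I : Set A) → (∀ a ∈ I, star a ∈ I) →
      I = ⊥ ∨ I = ⊤)
    (G : Hs →L[ℂ] Hs) (hG_sa : star G = G) (hG_un : G * G = 1)
    (γ : A ≃⋆ₐ[ℂ] A) (hγ : ∀ a : A, ι (γ a) = G * ι a * G)
    (hGnot : ∀ a : A, ι a ≠ G) :
    Function.Injective (fun p : A × A => ι p.1 + ι p.2 * G) ∧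
    (∀ p q : A × A,
      ι (cpMul γ p q).1 + ι (cpMul γ p q).2 * G = (ι p.1 + ι p.2 * G) * (ι q.1 + ι q.2 * G)) ∧
    (∀ p : A × A,
      ι (cpStar γ p).1 + ι (cpStar γ p).2 * G = star (ι p.1 + ι p.2 * G)) ∧
    (ι (cpOne : A × A).1 + ι (cpOne : A × A).2 * G = 1) ∧
    Set.range (fun p : A × A => ι p.1 + ι p.2 * G) =
      closure ((Algebra.adjoin ℂ (Set.range (fun a : A => ι a) ∪ {G}) :
        Subalgebra ℂ (Hs →L[ℂ] Hs)) : Set (Hs →L[ℂ] Hs)) := by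
  have hγγ : ∀ a, γ (γ a) = a := by
    intro a
    apply hι
    rw [hγ, hγ]
    calc G * (G * ι a * G) * G = (G * G) * ι a * (G * G) := by noncomm_ring
      _ = ι a := by rw [hG_un]; simp
  -- commutation relation
  have hcomm : ∀ a, G * ι a = ι (γ a) * G := by
    intro a
    rw [hγ, mul_assoc (G * ι a), hG_un, mul_one]
  have hmulG : ∀ s : Hs →L[ℂ] Hs, (∀ a, s * ι a = ι (γ a) * s) → s * s = 1 → ∀ a b c d : A,
      ι (a * c + b * γ d) + ι (a * d + b * γ c) * s = (ι a + ι b * s) * (ι c + ι d * s) := by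
    intro s h1 h2 a b c d
    have e1 : ι b * s * ι c = ι b * ι (γ c) * s := by rw [mul_assoc, h1, mul_assoc]
    have e2 : ι b * s * (ι d * s) = ι b * ι (γ d) := by
      rw [mul_assoc, ← mul_assoc s, h1, mul_assoc (ι (γ d)), h2, mul_one]
    simp only [map_add, map_mul, add_mul, mul_add, e1, ← mul_assoc]
    rw [mul_assoc (ι b * s), e2]
    abel
  have hstarG : ∀ s : Hs →L[ℂ] Hs, (∀ a, s * ι a = ι (γ a) * s) → star s = s → ∀ a b : A,
      ι (star a) + ι (γ (star b)) * s = star (ι a + ι b * s) := by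
    intro s h1 h2 a b
    rw [star_add, star_mul, h2, ← map_star, ← map_star, h1]
  have hcommN : ∀ a, (-G) * ι a = ι (γ a) * (-G) := by
    intro a
    rw [neg_mul, mul_neg, hcomm]
  have hN2 : (-G) * (-G) = 1 := by rw [neg_mul_neg, hG_un]
  have hNs : star (-G) = -G := by rw [star_neg, hG_sa]
  have hcont : Continuous ι := (NonUnitalStarAlgHom.isometry ι hι).continuous
  -- injectivity
  have hker : ∀ b : A, ι b * G ∈ Set.range ι → b = 0 := by
    let J : Ideal A :=
      { carrier := {b | ι b * G ∈ Set.range ι}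
        zero_mem' := ⟨0, by simp⟩
        add_mem' := by
          rintro x y ⟨a, ha⟩ ⟨b, hb⟩
          exact ⟨a + b, by rw [map_add, map_add, ha, hb, add_mul]⟩
        smul_mem' := by
          rintro c x ⟨a, ha⟩
          exact ⟨c * a, by rw [smul_eq_mul, map_mul, map_mul, ha, mul_assoc]⟩ }
    have hJ : J = ⊥ ∨ J = ⊤ := by
      apply hsimple
      · have : Continuous fun b => ι b * G := by fun_prop
        exact hclosed.preimage this
      · rintro x ⟨a, ha⟩
        refine ⟨γ (star a), ?_⟩
        have h : ι (star a) = G * ι (star x) := by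
          rw [map_star, ha, star_mul, hG_sa, map_star]
        rw [hγ, h, ← mul_assoc, hG_un, one_mul]
    intro b hb
    rcases hJ with h | h
    · have : b ∈ J := hb
      rw [h] at this
      simpa using this
    · exfalso
      have : (1 : A) ∈ J := by rw [h]; trivial
      obtain ⟨a, ha⟩ := this
      apply hGnot a
      simpa using ha
  have hker2 : ∀ a b : A, ι a + ι b * G = 0 → a = 0 ∧ b = 0 := by
    intro a b h
    have hb : b = 0 := hker b ⟨-a, by rw [map_neg]; exact neg_eq_of_add_eq_zero_right h⟩
    refine ⟨?_, hb⟩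
    apply hι
    simpa [hb] using h
  -- the faithful model of the crossed product
  let S : StarSubalgebra ℂ ((Hs →L[ℂ] Hs) × (Hs →L[ℂ] Hs)) :=
    { carrier := {x | ∃ a b : A, x.1 = ι a + ι b * G ∧ x.2 = ι a + ι b * (-G)}
      mul_mem' := by
        rintro x y ⟨a, b, h1, h2⟩ ⟨c, d, h3, h4⟩
        refine ⟨a * c + b * γ d, a * d + b * γ c, ?_, ?_⟩
        · rw [hmulG G hcomm hG_un, Prod.fst_mul, h1, h3]
        · rw [hmulG (-G) hcommN hN2, Prod.snd_mul, h2, h4]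
      add_mem' := by
        rintro x y ⟨a, b, h1, h2⟩ ⟨c, d, h3, h4⟩
        refine ⟨a + c, b + d, ?_, ?_⟩
        · rw [Prod.fst_add, h1, h3, map_add, map_add, add_mul]; abel
        · rw [Prod.snd_add, h2, h4, map_add, map_add, add_mul]; abel
      algebraMap_mem' := by
        intro r
        refine ⟨algebraMap ℂ A r, 0, ?_, ?_⟩
        · rw [AlgHomClass.commutes, map_zero, zero_mul, add_zero]; rfl
        · rw [AlgHomClass.commutes, map_zero, zero_mul, add_zero]; rfl
      star_mem' := by
        rintro x ⟨a, b, h1, h2⟩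
        refine ⟨star a, γ (star b), ?_, ?_⟩
        · rw [hstarG G hcomm hG_sa, Prod.fst_star, h1]
        · rw [hstarG (-G) hcommN hNs, Prod.snd_star, h2] }
  have hSclosed : IsClosed (S : Set ((Hs →L[ℂ] Hs) × (Hs →L[ℂ] Hs))) := by
    have : (S : Set ((Hs →L[ℂ] Hs) × (Hs →L[ℂ] Hs))) =
        (fun x => (2⁻¹ : ℂ) • (x.1 + x.2)) ⁻¹' Set.range ι ∩
        (fun x => (2⁻¹ : ℂ) • ((x.1 - x.2) * G)) ⁻¹' Set.range ι := by
      ext x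
      constructor
      · rintro ⟨a, b, h1, h2⟩
        refine ⟨⟨a, ?_⟩, ⟨b, ?_⟩⟩
        · simp only [h1, h2, mul_neg]
          module
        · have : (x.1 - x.2) * G = (2 : ℂ) • ι b := by
            calc (x.1 - x.2) * G = (2 : ℂ) • (ι b * (G * G)) := by
                  rw [h1, h2, ← mul_assoc, mul_neg, two_smul]; noncomm_ring
              _ = _ := by rw [hG_un, mul_one]
          simp only [this]
          module
      · rintro ⟨⟨a, ha⟩, ⟨b, hb⟩⟩
        simp only at ha hb
        have hb' : ι b * G = (2⁻¹ : ℂ) • (x.1 - x.2) := by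
          rw [hb, smul_mul_assoc, mul_assoc, hG_un, mul_one]
        refine ⟨a, b, ?_, ?_⟩
        · rw [hb', ha]; module
        · rw [mul_neg, hb', ha]; module
    rw [this]
    exact (hclosed.preimage (by fun_prop)).inter (hclosed.preimage (by fun_prop))
  have : CompleteSpace S := hSclosed.completeSpace_coe
  let φ : S →⋆ₐ[ℂ] (Hs →L[ℂ] Hs) := (StarAlgHom.fst ℂ _ _).comp S.subtype
  have hφ : Function.Injective φ := by
    rw [injective_iff_map_eq_zero]
    rintro ⟨x, a, b, h1, h2⟩ h
    have h0 : x.1 = 0 := h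
    obtain ⟨rfl, rfl⟩ := hker2 a b (h1 ▸ h0)
    apply Subtype.ext
    apply Prod.ext
    · exact h0
    · simpa using h2
  have hiso : Isometry φ := by
    letI : CStarAlgebra S := StarSubalgebra.cstarAlgebra S (h_closed := hSclosed)
    exact NonUnitalStarAlgHom.isometry φ hφ
  have hrange : Set.range φ = Set.range (fun p : A × A => ι p.1 + ι p.2 * G) := by
    ext y
    constructor
    · rintro ⟨⟨x, a, b, h1, h2⟩, rfl⟩
      exact ⟨(a, b), h1.symm⟩
    · rintro ⟨⟨a, b⟩, rfl⟩
      exact ⟨⟨(ι a + ι b * G, ι a + ι b * (-G)), a, b, rfl, rfl⟩, rfl⟩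
  have hRclosed : IsClosed (Set.range (fun p : A × A => ι p.1 + ι p.2 * G)) := by
    rw [← hrange]
    exact hiso.isClosedEmbedding.isClosed_range
  refine ⟨?_, ?_, ?_, ?_, ?_⟩
  · rintro ⟨a, b⟩ ⟨c, d⟩ h
    simp only at h
    obtain ⟨h1, h2⟩ := hker2 (a - c) (b - d) (by
      rw [map_sub, map_sub, sub_mul, sub_add_sub_comm, h, sub_self])
    rw [sub_eq_zero.1 h1, sub_eq_zero.1 h2]
  · intro p q
    exact hmulG G hcomm hG_un _ _ _ _
  · intro p
    exact hstarG G hcomm hG_sa _ _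
  · simp [cpOne]
  · apply Set.Subset.antisymm
    · rintro _ ⟨p, rfl⟩
      apply subset_closure
      exact add_mem (Algebra.subset_adjoin (Or.inl ⟨_, rfl⟩))
        (mul_mem (Algebra.subset_adjoin (Or.inl ⟨_, rfl⟩)) (Algebra.subset_adjoin (Or.inr rfl)))
    · apply closure_minimal _ hRclosed
      rw [← hrange]
      have : Algebra.adjoin ℂ (Set.range (fun a : A => ι a) ∪ {G}) ≤
          (φ : S →ₐ[ℂ] (Hs →L[ℂ] Hs)).range := by
        apply Algebra.adjoin_le
        have : (((φ : S →ₐ[ℂ] (Hs →L[ℂ] Hs)).range : Subalgebra ℂ (Hs →L[ℂ] Hs)) :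
            Set (Hs →L[ℂ] Hs)) = Set.range φ := rfl
        rw [this, hrange]
        rintro _ (⟨a, rfl⟩ | rfl)
        · exact ⟨(a, 0), by simp⟩
        · exact ⟨(0, 1), by simp⟩
      exact this

end
end

section
/- Let H be a Hilbert space, A ⊆ B(H) a simple unital C*-algebra, and G a selfadjoint unitary on H with G A G = A and G ∉ A, so that C*(A, G) ≅ A ⋊_{Ad_G} ℤ₂. Let U(t) = e^{itH₀} be a strongly continuous unitary one-parameter group on H commuting with G such that α_t := Ad_{U(t)}|_A defines a dynamics on A. If Tr_H(e^{−βH₀}) < ∞ and Tr_H(e^{−βH₀} G) ≠ 0 for some β, then the (α, β)-KMS state ω_β(a) := Tr_H(e^{−βH₀} a) / Tr_H(e^{−βH₀}) on A does not have a unique extension to a KMS state on the crossed product 𝐀 = A ⋊_{Ad_G} ℤ₂: the canonical extension ω_β ∘ E and the restriction of the Gibbs state g_β(x) = Tr_H(e^{−βH₀} x)/Tr_H(e^{−βH₀}) to 𝐀 are two distinct (𝛂, β)-KMS extensions. -/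
open scoped InnerProductSpace ComplexOrder

noncomputable section

variable {A : Type*} [CStarAlgebra A]

/-- The Gibbs functional `x ↦ Tr(e^{−βH₀} x) / Tr(e^{−βH₀})` on `B(H)`, expressed through
an orthonormal eigenbasis `e` of the Hamiltonian with eigenvalues `lam`. -/
def gibbsFn {Hs : Type*} [NormedAddCommGroup Hs] [InnerProductSpace ℂ Hs]
    {κ : Type*} (e : κ → Hs) (lam : κ → ℝ) (β : ℝ) (x : Hs →L[ℂ] Hs) : ℂ :=
  (∑' k, (Real.exp (-β * lam k) : ℂ) * ⟪e k, x (e k)⟫_ℂ) /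
    (∑' k, ((Real.exp (-β * lam k) : ℝ) : ℂ))

section GibbsHelpers

variable {Hs : Type*} [NormedAddCommGroup Hs] [InnerProductSpace ℂ Hs] [CompleteSpace Hs]
  {κ : Type*}

theorem gh_summable {e : κ → Hs} {lam : κ → ℝ} {β : ℝ} (he : Orthonormal ℂ e)
    (hs : Summable fun k => Real.exp (-β * lam k)) (x : Hs →L[ℂ] Hs) :
    Summable fun k => (Real.exp (-β * lam k) : ℂ) * ⟪e k, x (e k)⟫_ℂ := by
  refine Summable.of_norm_bounded (hs.mul_right ‖x‖) fun k => ?_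
  rw [norm_mul, Complex.norm_real, Real.norm_of_nonneg (Real.exp_pos _).le]
  refine mul_le_mul_of_nonneg_left ?_ (Real.exp_pos _).le
  calc ‖⟪e k, x (e k)⟫_ℂ‖ ≤ ‖e k‖ * ‖x (e k)‖ := norm_inner_le_norm _ _
    _ ≤ ‖e k‖ * (‖x‖ * ‖e k‖) := by gcongr; exact x.le_opNorm _
    _ = ‖x‖ := by rw [he.1 k]; ring

theorem gh_add {e : κ → Hs} {lam : κ → ℝ} {β : ℝ} (he : Orthonormal ℂ e)
    (hs : Summable fun k => Real.exp (-β * lam k)) (x y : Hs →L[ℂ] Hs) :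
    gibbsFn e lam β (x + y) = gibbsFn e lam β x + gibbsFn e lam β y := by
  unfold gibbsFn
  rw [← add_div, ← (gh_summable he hs x).tsum_add (gh_summable he hs y)]
  congr 1
  refine tsum_congr fun k => ?_
  rw [ContinuousLinearMap.add_apply, inner_add_right, mul_add]

theorem gh_smul {e : κ → Hs} {lam : κ → ℝ} {β : ℝ} (c : ℂ) (x : Hs →L[ℂ] Hs) :
    gibbsFn e lam β (c • x) = c * gibbsFn e lam β x := by
  unfold gibbsFn
  rw [← mul_div_assoc, ← tsum_mul_left]
  congr 1
  refine tsum_congr fun k => ?_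
  rw [ContinuousLinearMap.smul_apply, inner_smul_right]
  ring

theorem gh_Z {lam : κ → ℝ} {β : ℝ} [Nonempty κ]
    (hs : Summable fun k => Real.exp (-β * lam k)) :
    0 < (∑' k, ((Real.exp (-β * lam k) : ℝ) : ℂ)) := by
  rw [← Complex.ofReal_tsum, Complex.zero_lt_real]
  exact hs.tsum_pos (fun k => (Real.exp_pos _).le) (Classical.arbitrary κ) (Real.exp_pos _)

theorem gh_pos {e : κ → Hs} {lam : κ → ℝ} {β : ℝ} [Nonempty κ]
    (hs : Summable fun k => Real.exp (-β * lam k)) (x : Hs →L[ℂ] Hs) :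
    0 ≤ gibbsFn e lam β (star x * x) := by
  unfold gibbsFn
  have : (∑' k, (Real.exp (-β * lam k) : ℂ) * ⟪e k, (star x * x) (e k)⟫_ℂ)
      = ((∑' k, Real.exp (-β * lam k) * ‖x (e k)‖ ^ 2 : ℝ) : ℂ) := by
    rw [Complex.ofReal_tsum]
    refine tsum_congr fun k => ?_
    rw [ContinuousLinearMap.star_eq_adjoint, ContinuousLinearMap.mul_apply,
      ContinuousLinearMap.adjoint_inner_right, inner_self_eq_norm_sq_to_K]
    push_cast
    rfl
  rw [this, ← Complex.ofReal_tsum, ← Complex.ofReal_div, Complex.zero_le_real]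
  refine div_nonneg (tsum_nonneg fun k => ?_) (tsum_nonneg fun k => (Real.exp_pos _).le)
  positivity

theorem gh_one {e : κ → Hs} {lam : κ → ℝ} {β : ℝ} [Nonempty κ] (he : Orthonormal ℂ e)
    (hs : Summable fun k => Real.exp (-β * lam k)) :
    gibbsFn e lam β (1 : Hs →L[ℂ] Hs) = 1 := by
  unfold gibbsFn
  rw [div_eq_one_iff_eq (gh_Z hs).ne']
  refine tsum_congr fun k => ?_
  rw [ContinuousLinearMap.one_apply, inner_self_eq_norm_sq_to_K, he.1 k]
  simp

theorem gh_fubini {e : κ → Hs} {lam : κ → ℝ} {β : ℝ} (he : Orthonormal ℂ e)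
    (hs : Summable fun k => Real.exp (-β * lam k)) (x y : Hs →L[ℂ] Hs) :
    Summable fun p : κ × κ => (Real.exp (-β * lam p.1) : ℂ) *
      (⟪e p.1, y (e p.2)⟫_ℂ * ⟪e p.2, x (e p.1)⟫_ℂ) := by
  have hadj : ∀ j k, ‖⟪e j, y (e k)⟫_ℂ‖ = ‖⟪e k, (star y) (e j)⟫_ℂ‖ := fun j k => by
    rw [ContinuousLinearMap.star_eq_adjoint, ContinuousLinearMap.adjoint_inner_right,
      norm_inner_symm]
  have hrow : ∀ j, Summable fun k => Real.exp (-β * lam j) *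
      (‖⟪e k, (star y) (e j)⟫_ℂ‖ ^ 2 + ‖⟪e k, x (e j)⟫_ℂ‖ ^ 2) := fun j =>
    ((he.inner_products_summable (star y (e j))).add
      (he.inner_products_summable (x (e j)))).mul_left _
  have hb : ∀ (z : Hs →L[ℂ] Hs) j, ∑' k, ‖⟪e k, z (e j)⟫_ℂ‖ ^ 2 ≤ ‖z‖ ^ 2 := fun z j => by
    refine (he.tsum_inner_products_le (z (e j))).trans ?_
    gcongr
    simpa [he.1 j] using z.le_opNorm (e j)
  have hS : Summable fun p : κ × κ => Real.exp (-β * lam p.1) *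
      (‖⟪e p.2, (star y) (e p.1)⟫_ℂ‖ ^ 2 + ‖⟪e p.2, x (e p.1)⟫_ℂ‖ ^ 2) := by
    rw [summable_prod_of_nonneg (fun p => by dsimp only [Pi.zero_apply]; positivity)]
    refine ⟨hrow, ?_⟩
    refine Summable.of_nonneg_of_le (fun j => tsum_nonneg fun k => by positivity) (fun j => ?_)
      (hs.mul_right (‖star y‖ ^ 2 + ‖x‖ ^ 2))
    dsimp only
    rw [tsum_mul_left, (he.inner_products_summable (star y (e j))).tsum_add
      (he.inner_products_summable (x (e j)))]
    gcongr
    · exact hb _ _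
    · exact hb _ _
  refine Summable.of_norm_bounded hS fun p => ?_
  rw [norm_mul, Complex.norm_real, Real.norm_of_nonneg (Real.exp_pos _).le, norm_mul, hadj]
  refine mul_le_mul_of_nonneg_left ?_ (Real.exp_pos _).le
  nlinarith [sq_nonneg (‖⟪e p.2, (star y) (e p.1)⟫_ℂ‖ - ‖⟪e p.2, x (e p.1)⟫_ℂ‖),
    sq_nonneg (‖⟪e p.2, (star y) (e p.1)⟫_ℂ‖), sq_nonneg (‖⟪e p.2, x (e p.1)⟫_ℂ‖)]

theorem gh_matrix {e : κ → Hs}  (he : Orthonormal ℂ e)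
    (he_tot : Dense ((Submodule.span ℂ (Set.range e) : Submodule ℂ Hs) : Set Hs))
    (x y : Hs →L[ℂ] Hs) (k : κ) :
    ⟪e k, (x * y) (e k)⟫_ℂ = ∑' j, ⟪e k, x (e j)⟫_ℂ * ⟪e j, y (e k)⟫_ℂ := by
  have htop : ⊤ ≤ (Submodule.span ℂ (Set.range e)).topologicalClosure := by
    rw [Submodule.dense_iff_topologicalClosure_eq_top.mp he_tot]
  have := (HilbertBasis.mk he htop).tsum_inner_mul_inner
    (ContinuousLinearMap.adjoint x (e k)) (y (e k))
  simp only [HilbertBasis.coe_mk, ContinuousLinearMap.adjoint_inner_left] at this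
  rw [this]
  rfl

theorem gh_comm {e : κ → Hs} {lam : κ → ℝ} {β : ℝ} (he : Orthonormal ℂ e)
    (he_tot : Dense ((Submodule.span ℂ (Set.range e) : Submodule ℂ Hs) : Set Hs))
    (hs : Summable fun k => Real.exp (-β * lam k)) (x y y' : Hs →L[ℂ] Hs)
    (hy : ∀ j k, ⟪e j, y' (e k)⟫_ℂ = (Real.exp (-β * (lam j - lam k)) : ℂ) * ⟪e j, y (e k)⟫_ℂ) :
    gibbsFn e lam β (x * y') = gibbsFn e lam β (y * x) := by
  unfold gibbsFn
  congr 1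
  simp only [gh_matrix he he_tot, ← tsum_mul_left]
  rw [← (show Summable (Function.uncurry fun j k => (Real.exp (-β * lam j) : ℂ) *
      (⟪e j, y (e k)⟫_ℂ * ⟪e k, x (e j)⟫_ℂ)) from gh_fubini he hs x y).tsum_comm]
  refine tsum_congr fun k => tsum_congr fun j => ?_
  rw [hy, show (Real.exp (-β * lam j) : ℂ) =
    (Real.exp (-β * lam k) : ℂ) * (Real.exp (-β * (lam j - lam k)) : ℂ) by
      rw [← Complex.ofReal_mul, ← Real.exp_add]; congr 2; ring]
  ring

theorem gh_kms {e : κ → Hs} {lam : κ → ℝ} {β : ℝ} (he : Orthonormal ℂ e)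
    (he_tot : Dense ((Submodule.span ℂ (Set.range e) : Submodule ℂ Hs) : Set Hs))
    (hs : Summable fun k => Real.exp (-β * lam k))
    (U : ℝ → Hs ≃ₗᵢ[ℂ] Hs)
    (hU0 : ∀ ξ, U 0 ξ = ξ) (hUadd : ∀ s t ξ, U (s + t) ξ = U s (U t ξ))
    (he_eig : ∀ (t : ℝ) (k), U t (e k) = Complex.exp (Complex.I * t * lam k) • e k)
    (x y : Hs →L[ℂ] Hs) (F : ℂ → Hs →L[ℂ] Hs) (hF : Differentiable ℂ F)
    (hFt : ∀ (t : ℝ) ξ, F t ξ = U t (y (U (-t) ξ))) :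
    gibbsFn e lam β (x * F (Complex.I * β)) = gibbsFn e lam β (y * x) := by
  refine gh_comm he he_tot hs x y _ fun j k => ?_
  have h1 : Differentiable ℂ fun z => ⟪e j, F z (e k)⟫_ℂ :=
    (innerSL ℂ (e j)).differentiable.comp (hF.clm_apply (differentiable_const _))
  have h2 : Differentiable ℂ fun z : ℂ =>
      Complex.exp (Complex.I * z * (lam j - lam k)) * ⟪e j, y (e k)⟫_ℂ := by fun_prop
  have hreal : ∀ t : ℝ, ⟪e j, F t (e k)⟫_ℂ =
      Complex.exp (Complex.I * t * (lam j - lam k)) * ⟪e j, y (e k)⟫_ℂ := fun t => by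
    have hej : e j = U t (U (-t) (e j)) := by rw [← hUadd, add_neg_cancel, hU0]
    rw [hFt]
    conv_lhs => rw [hej]
    rw [LinearIsometryEquiv.inner_map_map, he_eig, he_eig, map_smul, inner_smul_left,
      inner_smul_right, ← Complex.exp_conj, ← mul_assoc, ← Complex.exp_add]
    congr 2
    simp
    ring
  have htend : Filter.Tendsto (fun t : ℝ => (t : ℂ)) (nhdsWithin 0 {0}ᶜ) (nhdsWithin 0 {0}ᶜ) := by
    refine tendsto_nhdsWithin_iff.mpr ⟨?_, ?_⟩
    · exact (Complex.continuous_ofReal.tendsto' 0 0 (by simp)).mono_left nhdsWithin_le_nhds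
    · filter_upwards [self_mem_nhdsWithin] with t ht
      simpa using ht
  have heq := AnalyticOnNhd.eq_of_frequently_eq (z₀ := 0)
    (h1.differentiableOn.analyticOnNhd isOpen_univ)
    (h2.differentiableOn.analyticOnNhd isOpen_univ)
    (htend.frequently (Filter.Eventually.of_forall hreal).frequently)
  have := congrFun heq (Complex.I * β)
  rw [this]
  congr 1
  push_cast
  congr 1
  linear_combination (β * (lam j - lam k) : ℂ) * Complex.I_mul_I

end GibbsHelpers

/-- In the setting of the previous lemma (`A ⊆ B(H)` simple unital, `G` a
selfadjoint unitary normalizing `A` with `G ∉ A`, so `C*(A,G) ≅ A ⋊_{Ad_G} ℤ₂`), let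
`U(t) = e^{itH₀}` be a strongly continuous unitary group commuting with `G` inducing a
dynamics `α` on `A`. If the Gibbs condition `Tr(e^{−βH₀}) < ∞` holds (expressed via an
orthonormal eigenbasis `e` with eigenvalues `lam` and `Σ e^{−β lam k} < ∞`) and
`Tr(e^{−βH₀} G) ≠ 0`, then the `(α,β)`-KMS state `ω_β = Tr(e^{−βH₀} ·)/Tr(e^{−βH₀})`
does not have a unique extension to the crossed product: the canonical extension
`ω_β ∘ E` and the restriction of the Gibbs state `g_β` to the crossed product are two
distinct `(𝛂, β)`-KMS extensions of `ω_β`. -/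
theorem gibbs_state_nonunique_extension
    {A : Type*} [CStarAlgebra A]
    {Hs : Type*} [NormedAddCommGroup Hs] [InnerProductSpace ℂ Hs] [CompleteSpace Hs]
    (ι : A →⋆ₐ[ℂ] (Hs →L[ℂ] Hs)) (hι : Function.Injective ι)
    (hsimple : ∀ I : Ideal A, IsClosed (I : Set A) → (∀ a ∈ I, star a ∈ I) →
      I = ⊥ ∨ I = ⊤)
    (G : Hs →L[ℂ] Hs) (hG_sa : star G = G) (hG_un : G * G = 1)
    (γ : A ≃⋆ₐ[ℂ] A) (hγ : ∀ a : A, ι (γ a) = G * ι a * G)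
    (hGnot : ∀ a : A, ι a ≠ G)
    (U : ℝ → Hs ≃ₗᵢ[ℂ] Hs)
    (hU0 : ∀ ξ, U 0 ξ = ξ) (hUadd : ∀ s t ξ, U (s + t) ξ = U s (U t ξ))
    (hUcont : ∀ ξ, Continuous fun t : ℝ => U t ξ)
    (hUG : ∀ (t : ℝ) (ξ), U t (G ξ) = G (U t ξ))
    (d : Dynamics A)
    (hd : ∀ (t : ℝ) (a : A) (ξ), ι (d.α t a) ξ = U t (ι a (U (-t) ξ)))
    (β : ℝ)
    {κ : Type*} (e : κ → Hs) (lam : κ → ℝ)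
    (he_on : Orthonormal ℂ e)
    (he_tot : Dense ((Submodule.span ℂ (Set.range e) : Submodule ℂ Hs) : Set Hs))
    (he_eig : ∀ (t : ℝ) (k), U t (e k) = Complex.exp (Complex.I * t * lam k) • e k)
    (hGibbs : Summable fun k => Real.exp (-β * lam k))
    (hGn0 : (∑' k, (Real.exp (-β * lam k) : ℂ) * ⟪e k, G (e k)⟫_ℂ) ≠ 0) :
    d.IsKMS β (fun a => gibbsFn e lam β (ι a)) ∧
    cpIsKMS d γ β (fun p : A × A => gibbsFn e lam β (ι p.1)) ∧
    cpIsKMS d γ β (fun p : A × A => gibbsFn e lam β (ι p.1 + ι p.2 * G)) ∧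
    (∀ a : A, gibbsFn e lam β (ι a + ι (0 : A) * G) = gibbsFn e lam β (ι a)) ∧
    (fun p : A × A => gibbsFn e lam β (ι p.1)) ≠
      (fun p : A × A => gibbsFn e lam β (ι p.1 + ι p.2 * G)) := by
  have hne : Nonempty κ := by
    by_contra h
    rw [not_nonempty_iff] at h
    exact hGn0 tsum_empty
  have hιc : Continuous ι :=
    AddMonoidHomClass.continuous_of_bound ι 1 fun a => by
      simpa using NonUnitalStarAlgHom.norm_apply_le ι a
  let ιL : A →L[ℂ] (Hs →L[ℂ] Hs) := ⟨ι.toAlgHom.toLinearMap, hιc⟩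
  have hιd : ∀ f : ℂ → A, Differentiable ℂ f → Differentiable ℂ fun z => ι (f z) :=
    fun f hf => ιL.differentiable.comp hf
  have key := fun x y F => gh_kms he_on he_tot hGibbs U hU0 hUadd he_eig x y F
  have hadd := fun x y => gh_add (β := β) (lam := lam) he_on hGibbs x y
  refine ⟨⟨⟨⟨?_, ?_⟩, ?_, ?_⟩, ?_⟩, ⟨⟨⟨?_, ?_⟩, ?_, ?_⟩, ?_⟩, ⟨⟨⟨?_, ?_⟩, ?_, ?_⟩, ?_⟩, ?_, ?_⟩
  · intro a b
    simp only [map_add, hadd]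
  · intro c a
    simp only [map_smul, gh_smul, smul_eq_mul]
  · intro a
    simp only [map_mul, map_star]
    exact gh_pos hGibbs _
  · simp only [map_one]
    exact gh_one he_on hGibbs
  · intro a b fa fb _ hb
    simp only [map_mul]
    refine key (ι a) (ι b) (fun z => ι (fb z)) (hιd _ hb.1) fun t ξ => ?_
    rw [hb.2, hd]
  · intro a b
    simp only [Prod.fst_add, map_add, hadd]
  · intro c a
    simp only [Prod.smul_fst, map_smul, gh_smul, smul_eq_mul]
  · intro p
    simp only [cpMul, cpStar, map_add, hadd, map_mul, map_star]
    exact add_nonneg (gh_pos hGibbs _) (gh_pos hGibbs _)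
  · simp only [cpOne, map_one]
    exact gh_one he_on hGibbs
  · intro p q fp fq _ hq
    have h1 := key (ι p.1) (ι q.1) (fun z => ι (fq z).1) (hιd _ hq.1.fst) fun t ξ => by
      rw [hq.2, hd]
    have h2 := key (ι p.2 * G) (ι q.2 * G) (fun z => ι (fq z).2 * G)
      ((hιd _ hq.1.snd).mul_const G) fun t ξ => by
      simp only [ContinuousLinearMap.mul_apply]
      rw [hq.2, hd, hUG]
    simp only [cpMul, map_add, hadd, map_mul, hγ]
    simp only [mul_assoc] at h1 h2 ⊢
    rw [h1, h2]
  · intro a b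
    simp only [Prod.fst_add, Prod.snd_add, map_add, add_mul, hadd]
    ring
  · intro c a
    simp only [Prod.smul_fst, Prod.smul_snd, map_smul, smul_mul_assoc, hadd, gh_smul, smul_eq_mul]
    ring
  · intro p
    have h := gh_pos (e := e) hGibbs (ι p.1 + ι p.2 * G)
    convert h using 2
    simp only [cpMul, cpStar, map_add, map_mul, hγ, map_star, star_add, star_mul, hG_sa]
    have hGG : ∀ x, G * (G * x) = x := fun x => by rw [← mul_assoc, hG_un, one_mul]
    simp only [mul_add, add_mul, mul_assoc, hGG, hG_un, mul_one]
    abel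
  · simp only [cpOne, map_one, map_zero, zero_mul, add_zero]
    exact gh_one he_on hGibbs
  · intro p q fp fq _ hq
    have hm : ∀ p q : A × A, ι (cpMul γ p q).1 + ι (cpMul γ p q).2 * G =
        (ι p.1 + ι p.2 * G) * (ι q.1 + ι q.2 * G) := by
      intro p q
      simp only [cpMul, map_add, map_mul, hγ, add_mul, mul_add, mul_assoc, hG_un, mul_one]
      abel
    simp only [hm]
    refine key _ _ (fun z => ι (fq z).1 + ι (fq z).2 * G)
      ((hιd _ hq.1.fst).add ((hιd _ hq.1.snd).mul_const G)) fun t ξ => ?_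
    simp only [ContinuousLinearMap.mul_apply, ContinuousLinearMap.add_apply]
    rw [hq.2, hd, hd, hUG, map_add]
  · intro a
    simp only [map_zero, zero_mul, add_zero]
  · intro h
    have h' := congrFun h (0, 1)
    simp only [map_zero, map_one, one_mul, zero_add] at h'
    have h0 : gibbsFn e lam β (0 : Hs →L[ℂ] Hs) = 0 := by simp [gibbsFn]
    rw [h0] at h'
    exact div_ne_zero hGn0 (gh_Z hGibbs).ne' h'.symm

end
end

section
/- Let (A, α, γ) be a graded C*-dynamical system, 𝐀 = A ⋊_γ ℤ₂ its Z₂-crossed product with extended dynamics 𝛂, and β ∈ ℝ. The map sending an (𝛂, β)-KMS state 𝛚 on 𝐀 to the pair (ω, ρ) with ω = 𝛚|_{A⊕0} and ρ = 𝛚|_{0⊕A} is a bijection from the set of (𝛂, β)-KMS states on 𝐀 onto the set of pairs (ω, ρ) where ω is a γ-invariant (α, β)-KMS state on A and ρ is a hermitian γ-twisted (α, β)-KMS functional on A dominated by ω. Its inverse sends (ω, ρ) to the state 𝛚(a, b) = ω(a) + ρ(b). -/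
open scoped InnerProductSpace ComplexOrder

noncomputable section

variable {A : Type*} [CStarAlgebra A]

theorem aux_sesq {V : Type*} [AddCommGroup V] [Module ℂ V] (H : V → V → ℂ)
    (al : ∀ x y z, H (x + y) z = H x z + H y z) (ar : ∀ x y z, H x (y + z) = H x y + H x z)
    (sl : ∀ (c : ℂ) x y, H (c • x) y = starRingEnd ℂ c * H x y)
    (sr : ∀ (c : ℂ) x y, H x (c • y) = c * H x y)
    (pos : ∀ x, 0 ≤ H x x) :
    (∀ x y, starRingEnd ℂ (H y x) = H x y) ∧
    (∀ x y, (‖H x y‖ : ℂ) ^ 2 ≤ H x x * H y y) := by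
  have herm : ∀ x y, starRingEnd ℂ (H y x) = H x y := by
    intro x y
    have im : ∀ x, (H x x).im = 0 := fun x => ((Complex.nonneg_iff.1 (pos x)).2).symm
    have h1 := im (x + y)
    have h2 := im (x + Complex.I • y)
    have hx := im x
    have hy := im y
    simp only [al, ar, sl, sr, Complex.add_im, Complex.mul_im, Complex.conj_I, Complex.neg_re,
      Complex.neg_im, Complex.I_re, Complex.I_im, Complex.mul_re] at h1 h2
    apply Complex.ext
    · simp; linarith
    · simp; linarith
  refine ⟨herm, fun x y => ?_⟩
  let c : PreInnerProductSpace.Core ℂ V :=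
    { inner := H
      conj_inner_symm := herm
      re_inner_nonneg := fun x => (Complex.nonneg_iff.1 (pos x)).1
      add_left := al
      smul_left := fun x y r => sl r x y }
  have h := @InnerProductSpace.Core.inner_mul_inner_self_le ℂ V _ _ _ c x y
  have h' : ‖H x y‖ * ‖H y x‖ ≤ (H x x).re * (H y y).re := h
  have hn : ‖H y x‖ = ‖H x y‖ := by rw [← herm x y, RCLike.norm_conj]
  rw [hn] at h'
  obtain ⟨u, hu⟩ : ∃ u : ℝ, H x x = u := ⟨(H x x).re, Complex.ext rfl (Complex.nonneg_iff.1 (pos x)).2.symm⟩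
  obtain ⟨v, hv⟩ : ∃ u : ℝ, H y y = u := ⟨(H y y).re, Complex.ext rfl (Complex.nonneg_iff.1 (pos y)).2.symm⟩
  rw [hu, hv] at h' ⊢
  simp only [Complex.ofReal_re] at h'
  rw [sq]
  exact_mod_cast h'

theorem aux_state_cs {ω : A → ℂ} (h : IsState ω) (a b : A) :
    (‖ω (star a * b)‖ : ℂ) ^ 2 ≤ ω (star a * a) * ω (star b * b) := by
  obtain ⟨hl, hp, h1⟩ := h
  refine (aux_sesq (fun x y : A => ω (star x * y)) ?_ ?_ ?_ ?_ hp).2 a b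
  · intro x y z; simp [add_mul, hl.map_add]
  · intro x y z; simp [mul_add, hl.map_add]
  · intro c x y; simp [hl.map_smul]
  · intro c x y; simp [hl.map_smul]

theorem aux_state_le {ω : A → ℂ} (h : IsState ω) (b : A) :
    ω (star b * b) ≤ ((‖b‖ ^ 2 : ℝ) : ℂ) := by
  let _ : PartialOrder A := CStarAlgebra.spectralOrder A
  have : StarOrderedRing A := CStarAlgebra.spectralOrderedRing A
  have h1 : star b * b ≤ algebraMap ℝ A (‖b‖ ^ 2) := CStarAlgebra.star_mul_le_algebraMap_norm_sq
  have h2 := sub_nonneg.2 h1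
  obtain ⟨c, hc⟩ := CStarAlgebra.nonneg_iff_eq_star_mul_self.1 h2
  have h3 := h.2.1 c
  rw [← hc] at h3
  have h4 : algebraMap ℝ A (‖b‖ ^ 2) = ((‖b‖ ^ 2 : ℝ) : ℂ) • (1 : A) := by
    rw [Algebra.algebraMap_eq_smul_one, Complex.coe_smul]
  rw [h4, h.1.map_sub, h.1.map_smul, h.2.2] at h3
  simpa using h3

theorem aux_dom_bound {ω ρ : A → ℂ} (h : IsState ω) (hd : Dominated ω ρ) (b : A) :
    ‖ρ b‖ ≤ ‖b‖ := by
  have h1 := hd 1 b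
  simp only [star_one, one_mul, h.2.2] at h1
  have h2 := h1.trans (aux_state_le h b)
  have h3 : ‖ρ b‖ ^ 2 ≤ ‖b‖ ^ 2 := by exact_mod_cast h2
  exact (pow_le_pow_iff_left₀ (norm_nonneg _) (norm_nonneg _) two_ne_zero).1 h3

open MeasureTheory Filter Topology

theorem aux_alpha_norm (d : Dynamics A) (t : ℝ) (a : A) : ‖d.α t a‖ = ‖a‖ :=
  NonUnitalStarAlgHom.norm_map (d.α t) (d.α t).injective a

def gsm (d : Dynamics A) (a : A) (ε : ℝ) (z : ℂ) : A :=
  ∫ s : ℝ, Complex.exp (-(s - z / ε) ^ 2) • d.α (ε * s) a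

theorem gsm_diff (d : Dynamics A) (a : A) (ε : ℝ) : Differentiable ℂ (gsm d a ε) := by
  intro z₀
  set R : ℝ := (‖z₀‖ + 1) / |ε| with hR
  have hR0 : 0 ≤ R := by positivity
  have hw : ∀ z ∈ Metric.ball z₀ 1, ‖z / (ε : ℂ)‖ ≤ R := by
    intro z hz
    rw [norm_div, Complex.norm_real, Real.norm_eq_abs]
    have : ‖z‖ ≤ ‖z₀‖ + 1 := by
      have h1 : ‖z - z₀‖ < 1 := by simpa [dist_eq_norm] using hz
      have h2 := norm_add_le (z - z₀) z₀
      simp only [sub_add_cancel] at h2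
      linarith
    rw [hR]
    gcongr
  have hexp : ∀ (w : ℂ) (s : ℝ), ‖w‖ ≤ R →
      ‖Complex.exp (-(s - w) ^ 2)‖ ≤ Real.exp (3 * R ^ 2) * Real.exp (-(1/2) * s ^ 2) := by
    intro w s hw
    rw [Complex.norm_exp, ← Real.exp_add]
    apply Real.exp_le_exp.2
    have h1 : |w.re| ≤ R := (Complex.abs_re_le_norm w).trans hw
    have h2 : |w.im| ≤ R := (Complex.abs_im_le_norm w).trans hw
    have h3 := sq_le_sq' (abs_le.1 h1).1 (abs_le.1 h1).2
    have h4 := sq_le_sq' (abs_le.1 h2).1 (abs_le.1 h2).2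
    have e : (-((s:ℂ) - w) ^ 2).re = -(s - w.re) ^ 2 + w.im ^ 2 := by
      simp [sq]; ring
    rw [e]
    nlinarith [sq_nonneg (s - 2 * w.re)]
  have hlin : ∀ s : ℝ, |s| * Real.exp (-(1/2) * s ^ 2) ≤ 2 * Real.exp (-(1/4) * s ^ 2) := by
    intro s
    have h1 : |s| ≤ 2 * Real.exp ((1/4) * s ^ 2) := by
      have := Real.add_one_le_exp ((1/4) * s ^ 2)
      nlinarith [sq_nonneg (|s| - 1), sq_abs s]
    calc |s| * Real.exp (-(1/2) * s ^ 2) ≤ (2 * Real.exp ((1/4) * s ^ 2)) * Real.exp (-(1/2) * s ^ 2) := by gcongr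
      _ = 2 * Real.exp (-(1/4) * s ^ 2) := by
        rw [mul_assoc, ← Real.exp_add]; congr 2; ring
  have hcont : Continuous fun s : ℝ => d.α (ε * s) a := (d.α_cont a).comp (by fun_prop)
  have i1 : Integrable fun s : ℝ => Real.exp (-(1/2) * s ^ 2) := integrable_exp_neg_mul_sq (by norm_num)
  have i2 : Integrable fun s : ℝ => Real.exp (-(1/4) * s ^ 2) := integrable_exp_neg_mul_sq (by norm_num)
  let F' : ℂ → ℝ → A := fun z s =>
    (Complex.exp (-(s - z / ε) ^ 2) * (2 * (s - z / ε) * (1 / ε))) • d.α (ε * s) a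
  let B : ℝ → ℝ := fun s => Real.exp (3 * R ^ 2) * (2 * ‖(1 / (ε:ℂ))‖) *
    (2 * Real.exp (-(1/4) * s ^ 2) + R * Real.exp (-(1/2) * s ^ 2)) * ‖a‖
  have key := hasDerivAt_integral_of_dominated_loc_of_deriv_le (μ := volume)
    (F := fun z (s : ℝ) => Complex.exp (-(s - z / ε) ^ 2) • d.α (ε * s) a) (F' := F')
    (x₀ := z₀) (s := Metric.ball z₀ 1) (bound := B) (Metric.ball_mem_nhds _ one_pos)
    (Eventually.of_forall fun z => by
      apply Continuous.aestronglyMeasurable; fun_prop)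
    (by
      refine Integrable.mono' (g := fun s => Real.exp (3 * R ^ 2) * Real.exp (-(1/2) * s ^ 2) * ‖a‖)
        ((i1.const_mul _).mul_const _) ?_ ?_
      · apply Continuous.aestronglyMeasurable; fun_prop
      · refine Eventually.of_forall fun s => ?_
        rw [norm_smul, aux_alpha_norm]
        gcongr
        exact hexp _ _ (hw _ (Metric.mem_ball_self one_pos)))
    (by apply Continuous.aestronglyMeasurable; fun_prop)
    (by
      refine Eventually.of_forall fun s z hz => ?_
      simp only [F', B]
      rw [norm_smul, aux_alpha_norm, norm_mul, norm_mul, norm_mul, Complex.norm_ofNat]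
      have h1 := hexp _ s (hw z hz)
      have h2 : ‖(s:ℂ) - z / ε‖ ≤ |s| + R := by
        refine (norm_sub_le _ _).trans ?_
        rw [Complex.norm_real, Real.norm_eq_abs]
        gcongr
        exact hw z hz
      refine mul_le_mul_of_nonneg_right ?_ (norm_nonneg a)
      calc _ ≤ (Real.exp (3 * R ^ 2) * Real.exp (-(1/2) * s ^ 2)) * (2 * (|s| + R) * ‖(1 / (ε:ℂ))‖) := by gcongr
        _ = Real.exp (3 * R ^ 2) * (2 * ‖(1 / (ε:ℂ))‖) * (|s| * Real.exp (-(1/2) * s ^ 2) + R * Real.exp (-(1/2) * s ^ 2)) := by ring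
        _ ≤ _ := mul_le_mul_of_nonneg_left (add_le_add (hlin s) le_rfl) (by positivity))
    ((((i2.const_mul _).add (i1.const_mul _)).const_mul _).mul_const _)
    (by
      refine Eventually.of_forall fun s z hz => ?_
      have h1 : HasDerivAt (fun z : ℂ => (s:ℂ) - z / ε) (-(1 / ε)) z :=
        ((hasDerivAt_id z).div_const _).const_sub _
      have h2 := ((h1.pow 2).neg.cexp).smul_const (d.α (ε * s) a)
      refine h2.congr_deriv ?_
      change _ = (Complex.exp (-(s - z / ε) ^ 2) * (2 * (s - z / ε) * (1 / ε))) • d.α (ε * s) a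
      congr 1
      simp)
  exact key.2.differentiableAt

theorem gsm_shift (d : Dynamics A) (a : A) {ε : ℝ} (hε : ε ≠ 0) (t : ℝ) :
    gsm d a ε t = d.α t (gsm d a ε (0 : ℂ)) := by
  have hL : ∀ g : ℝ → A, d.α t (∫ s, g s) = ∫ s, d.α t (g s) := by
    intro g
    let L : A ≃ₗᵢ[ℂ] A :=
      { (d.α t).toAlgEquiv.toLinearEquiv with norm_map' := aux_alpha_norm d t }
    exact (L.toContinuousLinearEquiv.integral_comp_comm g).symm
  unfold gsm
  rw [hL, ← integral_add_right_eq_self _ (t / ε)]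
  congr 1
  ext s
  rw [map_smul, ← d.α_add]
  have e1 : ε * (s + t / ε) = t + ε * s := by field_simp; ring
  rw [e1]
  congr 3
  push_cast
  ring

theorem gsm_tendsto (d : Dynamics A) (a : A) :
    Tendsto (fun n : ℕ => gsm d a (1 / ((n : ℝ) + 1)) (0 : ℂ)) atTop
      (𝓝 ((∫ s : ℝ, Complex.exp (-(s : ℂ) ^ 2)) • a)) := by
  rw [← integral_smul_const]
  unfold gsm
  have i1 : Integrable fun s : ℝ => Real.exp (-1 * s ^ 2) * ‖a‖ :=
    (integrable_exp_neg_mul_sq one_pos).mul_const _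
  refine tendsto_integral_of_dominated_convergence _ (fun n => ?_) i1 (fun n => ?_) ?_
  · apply Continuous.aestronglyMeasurable
    have : Continuous fun s : ℝ => d.α (1 / ((n : ℝ) + 1) * s) a := (d.α_cont a).comp (by fun_prop)
    fun_prop
  · refine Eventually.of_forall fun s => ?_
    rw [norm_smul, aux_alpha_norm, Complex.norm_exp]
    gcongr
    simp [sq]
  · refine Eventually.of_forall fun s => ?_
    simp only [zero_div, sub_zero]
    refine Tendsto.const_smul ?_ _
    have h1 : Tendsto (fun n : ℕ => (1 / ((n : ℝ) + 1)) * s) atTop (𝓝 (0 * s)) :=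
      tendsto_one_div_add_atTop_nhds_zero_nat.mul_const s
    rw [zero_mul] at h1
    have h2 := ((d.α_cont a).tendsto 0).comp h1
    rw [d.α_zero] at h2
    exact h2

theorem aux_density (d : Dynamics A) (φ : A → ℂ) (hl : IsLinearMap ℂ φ) (C : ℝ)
    (hb : ∀ a, ‖φ a‖ ≤ C * ‖a‖) (h0 : ∀ a f, d.IsAnalyticExt a f → φ a = 0) (a : A) : φ a = 0 := by
  let L : A →L[ℂ] ℂ := (hl.mk' φ).mkContinuous C hb
  have hL : ∀ a, L a = φ a := fun _ => rfl
  have h1 := (L.continuous.tendsto _).comp (gsm_tendsto d a)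
  have h2 : (L ∘ fun n : ℕ => gsm d a (1 / ((n : ℝ) + 1)) (0 : ℂ)) = fun _ => 0 := by
    ext n
    exact h0 _ (gsm d a (1 / ((n : ℝ) + 1))) ⟨gsm_diff d a _, fun t =>
      gsm_shift d a (by positivity) t⟩
  rw [h2] at h1
  have h3 := tendsto_nhds_unique h1 tendsto_const_nhds
  rw [map_smul, smul_eq_mul] at h3
  rcases mul_eq_zero.1 h3 with h | h
  · exfalso
    have h5 := integral_gaussian 1
    have h6 : (∫ s : ℝ, Complex.exp (-(s : ℂ) ^ 2)) = ((∫ s : ℝ, Real.exp (-1 * s ^ 2) : ℝ) : ℂ) := by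
      rw [← integral_complex_ofReal]
      congr 1; ext s; push_cast; congr 1; ring
    rw [h6, h5] at h
    have : √(Real.pi / 1) ≠ 0 := by positivity
    exact this (by exact_mod_cast h)
  · exact h

theorem aux_inv (S : GradedDyn A) (φ : A → ℂ) (hl : IsLinearMap ℂ φ)
    (hb : ∀ a, ‖φ a‖ ≤ ‖a‖) (h0 : ∀ a f, S.IsAnalyticExt a f → φ (S.γ a) = φ a) (a : A) :
    φ (S.γ a) = φ a := by
  refine sub_eq_zero.1 (aux_density S.toDynamics (fun a => φ (S.γ a) - φ a) ⟨?_, ?_⟩ 2 ?_ ?_ a)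
  · intro x y; simp only [map_add, hl.map_add]; ring
  · intro c x; simp only [map_smul, hl.map_smul, smul_eq_mul]; ring
  · intro x
    have h1 := hb (S.γ x)
    have h3 : ‖S.γ x‖ = ‖x‖ := NonUnitalStarAlgHom.norm_map S.γ S.γ.injective x
    rw [h3] at h1
    have := norm_sub_le (φ (S.γ x)) (φ x)
    have := hb x
    linarith
  · intro x f hf
    exact sub_eq_zero.2 (h0 x f hf)

theorem aux_const (d : Dynamics A) : d.IsAnalyticExt 1 (fun _ => 1) :=
  ⟨differentiable_const _, fun t => by simp⟩

theorem aux_zero (d : Dynamics A) : d.IsAnalyticExt 0 (fun _ => 0) :=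
  ⟨differentiable_const _, fun t => by simp⟩

theorem aux_pair (d : Dynamics A) {a b : A} {f g : ℂ → A} (hf : d.IsAnalyticExt a f)
    (hg : d.IsAnalyticExt b g) : cpIsAnalyticExt d (a, b) (fun z => (f z, g z)) :=
  ⟨hf.1.prodMk hg.1, fun t => by simp [hf.2, hg.2]⟩

theorem aux_gamma_ext (S : GradedDyn A) {a : A} {f : ℂ → A} (hf : S.IsAnalyticExt a f) :
    S.IsAnalyticExt (S.γ a) (fun z => S.γ (f z)) := by
  let L : A →ₗᵢ[ℂ] A :=
    { S.γ.toAlgEquiv.toLinearEquiv.toLinearMap with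
      norm_map' := NonUnitalStarAlgHom.norm_map S.γ S.γ.injective }
  refine ⟨L.toContinuousLinearMap.differentiable.comp hf.1, fun t => ?_⟩
  change S.γ (f t) = _
  rw [hf.2, S.γ_comm]

theorem aux_cp_sesq (γ : A ≃⋆ₐ[ℂ] A) (W : A × A → ℂ) (h : cpIsState γ W) :
    (∀ x y, starRingEnd ℂ (W (cpMul γ (cpStar γ y) x)) = W (cpMul γ (cpStar γ x) y)) ∧
    (∀ x y, (‖W (cpMul γ (cpStar γ x) y)‖ : ℂ) ^ 2 ≤
      W (cpMul γ (cpStar γ x) x) * W (cpMul γ (cpStar γ y) y)) := by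
  obtain ⟨hl, hp, h1⟩ := h
  refine aux_sesq (fun x y : A × A => W (cpMul γ (cpStar γ x) y)) ?_ ?_ ?_ ?_ hp
  · intro x y z
    rw [← hl.map_add]
    congr 1
    simp only [cpMul, cpStar, Prod.fst_add, Prod.snd_add, star_add, map_add, add_mul, Prod.mk_add_mk]
    congr 1 <;> abel
  · intro x y z
    rw [← hl.map_add]
    congr 1
    simp only [cpMul, cpStar, Prod.fst_add, Prod.snd_add, map_add, mul_add, Prod.mk_add_mk]
    congr 1 <;> abel
  · intro c x y
    rw [← smul_eq_mul, ← hl.map_smul]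
    congr 1
    simp only [cpMul, cpStar, Prod.smul_fst, Prod.smul_snd, star_smul, map_smul, smul_mul_assoc,
      Prod.smul_mk, smul_add]
    rfl
  · intro c x y
    rw [← smul_eq_mul, ← hl.map_smul]
    congr 1
    simp only [cpMul, cpStar, Prod.smul_fst, Prod.smul_snd, map_smul, mul_smul_comm,
      Prod.smul_mk, smul_add]

theorem aux_fwd' (S : GradedDyn A) (β : ℝ) (W : A × A → ℂ) (h : cpIsKMS S.toDynamics S.γ β W)
    (ω ρ : A → ℂ) (hω : ∀ a, W (a, 0) = ω a) (hρ : ∀ a, W (0, a) = ρ a) :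
    (S.toDynamics.IsKMS β ω ∧ ∀ a, ω (S.γ a) = ω a) ∧
        TwistedKMSDom S.toDynamics S.γ β ω ρ := by
  obtain ⟨⟨hl, hp, h1⟩, hk⟩ := h
  have hcs := aux_cp_sesq S.γ W ⟨hl, hp, h1⟩
  have hl1 : IsLinearMap ℂ ω :=
    ⟨fun x y => by simp only [← hω, ← hl.map_add, Prod.mk_add_mk, add_zero],
      fun c x => by simp only [← hω, ← hl.map_smul, Prod.smul_mk, smul_zero]⟩
  have hl2 : IsLinearMap ℂ ρ :=
    ⟨fun x y => by simp only [← hρ, ← hl.map_add, Prod.mk_add_mk, add_zero],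
      fun c x => by simp only [← hρ, ← hl.map_smul, Prod.smul_mk, smul_zero]⟩
  have hs : IsState ω := by
    refine ⟨hl1, fun a => ?_, by rw [← hω]; exact h1⟩
    have := hp (a, 0)
    simp only [cpMul, cpStar, star_zero, map_zero, mul_zero, add_zero, zero_mul, hω] at this
    exact this
  have hωb : ∀ a, ‖ω a‖ ≤ ‖a‖ := aux_dom_bound hs (aux_state_cs hs)
  have hinv : ∀ a, ω (S.γ a) = ω a := by
    refine aux_inv S ω hl1 hωb fun a f hf => ?_
    have := hk _ _ _ _ (aux_pair S.toDynamics (aux_zero _) (aux_gamma_ext S hf))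
      (aux_pair S.toDynamics (aux_zero _) (aux_const _))
    simp only [cpMul, map_zero, map_one, mul_zero, add_zero, zero_mul, zero_add, mul_one, one_mul,
      S.γ_invol, hω] at this
    exact this
  have hdom : Dominated ω ρ := by
    intro a b
    have := hcs.2 (a, 0) (0, b)
    simp only [cpMul, cpStar, star_zero, map_zero, mul_zero, add_zero, zero_mul, zero_add,
      ← map_mul, hω, hρ, hinv] at this
    exact this
  have htw : S.toDynamics.IsTwistedKMS S.γ β ρ := by
    refine ⟨hl2, fun a b fa fb ha hb => ?_⟩
    have := hk _ _ _ _ (aux_pair S.toDynamics ha (aux_zero _)) (aux_pair S.toDynamics (aux_zero _) hb)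
    simp only [cpMul, map_zero, mul_zero, add_zero, zero_mul, zero_add, hρ] at this
    exact this
  have hinv2 : ∀ a, ρ (S.γ a) = ρ a := by
    refine aux_inv S ρ hl2 (aux_dom_bound hs hdom) fun a f hf => ?_
    have := htw.2 _ _ _ _ hf (aux_const _)
    simp only [mul_one, one_mul] at this
    exact this.symm
  refine ⟨⟨⟨hs, fun a b fa fb ha hb => ?_⟩, hinv⟩, htw, fun a => ?_, hdom⟩
  · have := hk _ _ _ _ (aux_pair S.toDynamics ha (aux_zero _)) (aux_pair S.toDynamics hb (aux_zero _))
    simp only [cpMul, map_zero, mul_zero, add_zero, zero_mul, zero_add, hω] at this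
    exact this
  · have := hcs.1 (0, a) (1, 0)
    simp only [cpMul, cpStar, map_zero, star_zero, mul_zero, zero_mul, star_one, one_mul, mul_one,
      map_one, add_zero, zero_add, hρ, hinv2] at this
    exact this.symm

theorem aux_bwd (S : GradedDyn A) (β : ℝ) (ω ρ : A → ℂ)
    (h : S.toDynamics.IsKMS β ω) (hinv : ∀ a, ω (S.γ a) = ω a)
    (hr : TwistedKMSDom S.toDynamics S.γ β ω ρ) :
    cpIsKMS S.toDynamics S.γ β (fun q => ω q.1 + ρ q.2) := by
  obtain ⟨hs, hk⟩ := h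
  obtain ⟨⟨hl2, htw⟩, hh, hdom⟩ := hr
  have hl1 := hs.1
  have hinv2 : ∀ a, ρ (S.γ a) = ρ a := by
    refine aux_inv S _ hl2 (aux_dom_bound hs hdom) fun a f hf => ?_
    have := htw _ _ _ _ hf (aux_const _)
    simpa using this.symm
  refine ⟨⟨⟨fun x y => ?_, fun c x => ?_⟩, ?_, ?_⟩, ?_⟩
  · simp only [Prod.fst_add, Prod.snd_add, hl1.map_add, hl2.map_add]; ring
  · simp only [Prod.smul_fst, Prod.smul_snd, hl1.map_smul, hl2.map_smul, smul_add]
  · rintro ⟨a, b⟩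
    simp only [cpMul, cpStar, ← map_mul, hl1.map_add, hl2.map_add, hinv, hinv2]
    have e : ρ (star b * a) = starRingEnd ℂ (ρ (star a * b)) := by
      rw [← hh]; simp
    have hd := hdom a b
    have pa := hs.2.1 a
    have pb := hs.2.1 b
    obtain ⟨u, hu⟩ : ∃ u : ℝ, ω (star a * a) = u := ⟨_, Complex.ext rfl (Complex.nonneg_iff.1 pa).2.symm⟩
    obtain ⟨v, hv⟩ : ∃ u : ℝ, ω (star b * b) = u := ⟨_, Complex.ext rfl (Complex.nonneg_iff.1 pb).2.symm⟩
    rw [hu] at pa hd ⊢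
    rw [hv] at pb hd ⊢
    rw [e, Complex.add_conj]
    have pa' : 0 ≤ u := by exact_mod_cast pa
    have pb' : 0 ≤ v := by exact_mod_cast pb
    have hd' : ‖ρ (star a * b)‖ ^ 2 ≤ u * v := by exact_mod_cast hd
    have hre := Complex.abs_re_le_norm (ρ (star a * b))
    have : 0 ≤ u + v + 2 * (ρ (star a * b)).re := by
      have h1 : ‖ρ (star a * b)‖ * 2 ≤ u + v := by
        apply abs_le_of_sq_le_sq' _ (by positivity) |>.2
        nlinarith [sq_nonneg (u - v)]
      have := (abs_le.1 hre).1
      linarith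
    exact_mod_cast this
  · simp only [cpOne, hs.2.2, hl2.map_zero, add_zero]
  · rintro ⟨a, b⟩ ⟨c, d⟩ fp fq hp hq
    have split : ∀ {x y : A} {f : ℂ → A × A}, cpIsAnalyticExt S.toDynamics (x, y) f →
        S.IsAnalyticExt x (fun z => (f z).1) ∧ S.IsAnalyticExt y (fun z => (f z).2) :=
      fun hf => ⟨⟨hf.1.fst, fun t => congrArg Prod.fst (hf.2 t)⟩, ⟨hf.1.snd, fun t => congrArg Prod.snd (hf.2 t)⟩⟩
    obtain ⟨ha, hb⟩ := split hp
    obtain ⟨hc, hd⟩ := split hq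
    have e1 := hk _ _ _ _ ha hc
    have e2 := hk _ _ _ _ hb (aux_gamma_ext S hd)
    have e3 := htw _ _ _ _ ha hd
    have e4 := htw _ _ _ _ hb (aux_gamma_ext S hc)
    have e2' : ω (S.γ d * b) = ω (d * S.γ b) := by
      rw [← hinv (S.γ d * b), map_mul, S.γ_invol]
    rw [← map_mul, hinv2] at e4
    simp only [cpMul, hl1.map_add, hl2.map_add]
    rw [e1, e3, e4, e2, e2']
    ring

/-- The map `𝛚 ↦ (𝛚|_{A⊕0}, 𝛚|_{0⊕A})` is a bijection from the set of
`(𝛂, β)`-KMS states of the crossed product `A ⋊_γ ℤ₂` onto the set of pairs `(ω, ρ)`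
with `ω` a `γ`-invariant `(α, β)`-KMS state on `A` and `ρ` a hermitian `γ`-twisted
`(α, β)`-KMS functional dominated by `ω`; its inverse sends `(ω, ρ)` to the state
`𝛚(a, b) = ω(a) + ρ(b)`. -/
theorem kms_states_crossed_product_bijection {A : Type*} [CStarAlgebra A]
    (S : GradedDyn A) (β : ℝ) :
    Set.BijOn (fun W : A × A → ℂ => ((fun a => W (a, 0)), (fun b => W (0, b))))
      {W : A × A → ℂ | cpIsKMS S.toDynamics S.γ β W}
      {p : (A → ℂ) × (A → ℂ) |
        (S.toDynamics.IsKMS β p.1 ∧ ∀ a, p.1 (S.γ a) = p.1 a) ∧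
        TwistedKMSDom S.toDynamics S.γ β p.1 p.2} ∧
    Set.InvOn (fun p : (A → ℂ) × (A → ℂ) => (fun q : A × A => p.1 q.1 + p.2 q.2))
      (fun W : A × A → ℂ => ((fun a => W (a, 0)), (fun b => W (0, b))))
      {W : A × A → ℂ | cpIsKMS S.toDynamics S.γ β W}
      {p : (A → ℂ) × (A → ℂ) |
        (S.toDynamics.IsKMS β p.1 ∧ ∀ a, p.1 (S.γ a) = p.1 a) ∧
        TwistedKMSDom S.toDynamics S.γ β p.1 p.2} := by
  have hmaps : Set.MapsTo (fun W : A × A → ℂ => ((fun a => W (a, 0)), (fun b => W (0, b))))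
      {W : A × A → ℂ | cpIsKMS S.toDynamics S.γ β W}
      {p : (A → ℂ) × (A → ℂ) |
        (S.toDynamics.IsKMS β p.1 ∧ ∀ a, p.1 (S.γ a) = p.1 a) ∧
        TwistedKMSDom S.toDynamics S.γ β p.1 p.2} := fun W hW => aux_fwd' S β W hW _ _ (fun _ => rfl) (fun _ => rfl)
  have hinv : Set.InvOn (fun p : (A → ℂ) × (A → ℂ) => (fun q : A × A => p.1 q.1 + p.2 q.2))
      (fun W : A × A → ℂ => ((fun a => W (a, 0)), (fun b => W (0, b))))
      {W : A × A → ℂ | cpIsKMS S.toDynamics S.γ β W}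
      {p : (A → ℂ) × (A → ℂ) |
        (S.toDynamics.IsKMS β p.1 ∧ ∀ a, p.1 (S.γ a) = p.1 a) ∧
        TwistedKMSDom S.toDynamics S.γ β p.1 p.2} := by
    constructor
    · intro W hW
      funext q
      have hl : IsLinearMap ℂ W := hW.1.1
      simp [← hl.map_add]
    · rintro ⟨ω, ρ⟩ ⟨⟨h1, -⟩, h2⟩
      have e1 : ω 0 = 0 := h1.1.1.map_zero
      have e2 : ρ 0 = 0 := h2.1.1.map_zero
      simp [e1, e2]
  refine ⟨hinv.bijOn hmaps ?_, hinv⟩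
  rintro ⟨ω, ρ⟩ ⟨⟨h1, h2⟩, h3⟩
  exact aux_bwd S β ω ρ h1 h2 h3

end
end

section
/- Let (M, Ω, V) be a graded von Neumann algebra with modular data (J, Δ), and Z(M, V) = {x ∈ M : J x* J = x V} its V-twisted center. Then: (i) Z(M, V) ⊆ M^γ ∩ M^α, i.e. every x ∈ Z(M, V) satisfies V x V = x and Δ^{it} x Δ^{−it} = x for all t ∈ ℝ; (ii) every x ∈ Z(M, V) satisfies x y = (V y V) x for all y ∈ M; (iii) for all x₁, x₂ ∈ Z(M, V) the product x₁ x₂ lies in the Ad_V-invariant part Z(M)^γ of the center Z(M); (iv) for x ∈ Z(M, V) and z ∈ Z(M) one has x z = z x ∈ Z(M, V). -/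
open scoped InnerProductSpace ComplexOrder

noncomputable section

variable {H : Type*} [NormedAddCommGroup H] [InnerProductSpace ℂ H] [CompleteSpace H]

/-- A graded von Neumann algebra in standard form: a von Neumann algebra `M` with a cyclic
and separating vector `Ω`, the associated modular data `(J, Δ^{it})` (characterized by the
Tomita-Takesaki relations below), and a `ℤ₂`-grading `V`. -/
structure GradedVN (H : Type*) [NormedAddCommGroup H] [InnerProductSpace ℂ H]
    [CompleteSpace H] where
  M : VonNeumannAlgebra H
  Ω : H
  cyclic : Dense {ξ : H | ∃ x ∈ M, x Ω = ξ}
  separating : ∀ x ∈ M, x Ω = 0 → x = 0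
  /-- the modular conjugation (an antiunitary involution) -/
  J : H → H
  J_add : ∀ ξ η, J (ξ + η) = J ξ + J η
  J_smul : ∀ (c : ℂ) (ξ), J (c • ξ) = starRingEnd ℂ c • J ξ
  J_inner : ∀ ξ η, ⟪J ξ, J η⟫_ℂ = ⟪η, ξ⟫_ℂ
  J_invol : ∀ ξ, J (J ξ) = ξ
  J_Ω : J Ω = Ω
  /-- the modular group `Δ^{it}` -/
  U : ℝ → H ≃ₗᵢ[ℂ] H
  U_zero : ∀ ξ, U 0 ξ = ξ
  U_add : ∀ s t ξ, U (s + t) ξ = U s (U t ξ)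
  U_cont : ∀ ξ, Continuous fun t : ℝ => U t ξ
  U_Ω : ∀ t, U t Ω = Ω
  J_U : ∀ t ξ, J (U t ξ) = U t (J ξ)
  flow_mem : ∀ t : ℝ, ∀ x ∈ M, ∃ y ∈ M, ∀ ξ, y ξ = U t (x (U (-t) ξ))
  /-- `J M J ⊆ M'` -/
  tomita : ∀ x ∈ M, ∀ y ∈ M, ∀ ξ, J (x (J (y ξ))) = y (J (x (J ξ)))
  /-- `S = J Δ^{1/2}` maps `xΩ` to `x*Ω`, expressed via analytic continuation of the
  modular group. -/
  S_cond : ∀ x ∈ M, ∀ f : ℂ → H, Differentiable ℂ f → (∀ t : ℝ, f (t : ℂ) = U t (x Ω)) →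
    J (f (-(Complex.I) / 2)) = star x Ω
  /-- the grading -/
  V : H →L[ℂ] H
  V_star : star V = V
  V_invol : ∀ ξ, V (V ξ) = ξ
  V_Ω : V Ω = Ω
  V_mem : ∀ x ∈ M, ∃ y ∈ M, ∀ ξ, y ξ = V (x (V ξ))

namespace GradedVN

variable (N : GradedVN H)

/-- The `V`-twisted center `Z(M, V) = {x ∈ M | J x* J = x V}`. -/
def twistedCenter : Set (H →L[ℂ] H) :=
  {x | x ∈ N.M ∧ ∀ ξ, N.J (star x (N.J ξ)) = x (N.V ξ)}

/-- The center `Z(M)` of `M`. -/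
def centerSet : Set (H →L[ℂ] H) :=
  {z | z ∈ N.M ∧ ∀ y ∈ N.M, z * y = y * z}

/-- The `Ad_V`-fixed points `M^γ`. -/
def gammaFixed : Set (H →L[ℂ] H) :=
  {x | x ∈ N.M ∧ ∀ ξ, N.V (x (N.V ξ)) = x ξ}

/-- The fixed points `M^α` of the modular flow. -/
def flowFixed : Set (H →L[ℂ] H) :=
  {x | x ∈ N.M ∧ ∀ (t : ℝ) (ξ), x (N.U t ξ) = N.U t (x ξ)}

/-- The centralizer `Z_Ω(M)`. -/
def centralizerSet : Set (H →L[ℂ] H) :=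
  {x | x ∈ N.M ∧ ∀ y ∈ N.M, ⟪N.Ω, x (y N.Ω)⟫_ℂ = ⟪N.Ω, y (x N.Ω)⟫_ℂ}

/-- The twisted center of the reduced algebra `(M_p, V_p)` for a central `Ad_V`-invariant
projection `p` (for such `p`, the modular conjugation of `(pMp, pΩ)` is `J` restricted
to `pH`, so the relative twisted center consists of the `p`-supported elements of `M`
satisfying the twisted-center relation). -/
def tcRel (p : H →L[ℂ] H) : Set (H →L[ℂ] H) :=
  {x | x ∈ N.M ∧ x * p = x ∧ p * x = x ∧ ∀ ξ, N.J (star x (N.J ξ)) = x (N.V ξ)}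

/-- `p` is an `Ad_V`-invariant central projection. -/
def IsCentralInvProj (p : H →L[ℂ] H) : Prop :=
  p ∈ N.centerSet ∧ star p = p ∧ p * p = p ∧ ∀ ξ, N.V (p (N.V ξ)) = p ξ

/-- `p` is an `Ad_V`-invariant central projection carrying a partial isometry in the
relative twisted center which is unitary on `pH`. -/
def HasPI (p : H →L[ℂ] H) : Prop :=
  N.IsCentralInvProj p ∧ ∃ u ∈ N.tcRel p, star u * u = p ∧ u * star u = p

/-- Asymptotically abelian modular flow: `[α_t(x), y] → 0` weakly as `t → ∞`. -/
def AsympAbelian : Prop :=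
  ∀ x ∈ N.M, ∀ y ∈ N.M, ∀ ξ η : H,
    Filter.Tendsto
      (fun t : ℝ => ⟪ξ, N.U t (x (N.U (-t) (y η))) - y (N.U t (x (N.U (-t) η)))⟫_ℂ)
      Filter.atTop (nhds 0)

/-- `V`-graded asymptotically abelian modular flow:
`[α_t(x), y]_V = α_t(x) y − (V y V) α_t(x) → 0` weakly as `t → ∞`. -/
def GradedAsympAbelian : Prop :=
  ∀ x ∈ N.M, ∀ y ∈ N.M, ∀ ξ η : H,
    Filter.Tendsto
      (fun t : ℝ =>
        ⟪ξ, N.U t (x (N.U (-t) (y η))) - N.V (y (N.V (N.U t (x (N.U (-t) η)))))⟫_ℂ)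
      Filter.atTop (nhds 0)

end GradedVN


namespace GradedVN

open MeasureTheory Filter Topology

/-- Gaussian kernel with complex center. -/
def gk (a : ℂ) (t : ℝ) : ℂ := Complex.exp (-((t : ℂ) - a) ^ 2)

lemma gk_cont (a : ℂ) : Continuous (gk a) := by
  unfold gk; fun_prop

lemma gk_int (a : ℂ) : Integrable (gk a) := by
  have h := integrable_cexp_quadratic (b := 1) (by simp) (2 * a) (-a ^ 2)
  refine h.congr (Eventually.of_forall fun t => ?_)
  simp only [gk]
  congr 1
  ring

lemma gk_smul_int (a : ℂ) {g : ℝ → H} (hg : Continuous g) {C : ℝ} (hC : ∀ t, ‖g t‖ ≤ C) :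
    Integrable (fun t => gk a t • g t) :=
  (gk_int a).smul_bdd C hg.aestronglyMeasurable (Eventually.of_forall hC)

lemma gk_deriv (a : ℂ) (t : ℝ) :
    HasDerivAt (fun a => gk a t) (2 * ((t : ℂ) - a) * gk a t) a := by
  have h1 : HasDerivAt (fun a : ℂ => (t : ℂ) - a) (-1) a := by
    simpa using (hasDerivAt_id a).const_sub (t : ℂ)
  have h2 := ((h1.pow 2).neg).cexp
  refine h2.congr_deriv ?_
  simp [gk]
  ring

lemma gk_deriv_bound (R : ℝ) (a : ℂ) (ha : ‖a‖ ≤ R) (t : ℝ) :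
    ‖2 * ((t : ℂ) - a) * gk a t‖ ≤
      Real.exp (2 * (R + 1) ^ 2 + R ^ 2 + 2 * R) * Real.exp (-(1 / 2) * t ^ 2) := by
  have hR : 0 ≤ R := (norm_nonneg a).trans ha
  have h1 : ‖(2 : ℂ) * ((t : ℂ) - a)‖ ≤ Real.exp (2 * (|t| + R)) := by
    have h3 : ‖(t : ℂ) - a‖ ≤ |t| + R := by
      refine (norm_sub_le _ _).trans ?_
      rw [Complex.norm_real, Real.norm_eq_abs]
      linarith
    rw [norm_mul]
    have := Real.add_one_le_exp (2 * (|t| + R))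
    simp only [Complex.norm_ofNat]
    linarith
  have h2 : ‖gk a t‖ ≤ Real.exp (-t ^ 2 + 2 * |t| * R + R ^ 2) := by
    unfold gk
    rw [Complex.norm_exp]
    apply Real.exp_le_exp.2
    have e : (-((t : ℂ) - a) ^ 2) = ((-t ^ 2 : ℝ) : ℂ) + (2 * (t : ℂ) * a - a ^ 2) := by
      push_cast; ring
    rw [e, Complex.add_re, Complex.ofReal_re]
    have h4 : (2 * (t : ℂ) * a - a ^ 2).re ≤ 2 * |t| * ‖a‖ + ‖a‖ ^ 2 := by
      refine (Complex.re_le_norm _).trans ((norm_sub_le _ _).trans ?_)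
      simp
    have h5 : 2 * |t| * ‖a‖ ≤ 2 * |t| * R := by gcongr
    have h6 : ‖a‖ ^ 2 ≤ R ^ 2 := by gcongr
    linarith
  rw [norm_mul]
  calc _ ≤ Real.exp (2 * (|t| + R)) * Real.exp (-t ^ 2 + 2 * |t| * R + R ^ 2) := by gcongr
    _ ≤ _ := by
      rw [← Real.exp_add, ← Real.exp_add]
      apply Real.exp_le_exp.2
      nlinarith [sq_nonneg (|t| - 2 * (R + 1)), sq_abs t]

lemma gk_differentiable {g : ℝ → H} (hg : Continuous g) {C : ℝ} (hC : ∀ t, ‖g t‖ ≤ C) :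
    Differentiable ℂ (fun a => ∫ t, gk a t • g t) := by
  intro a₀
  have hC0 : 0 ≤ C := (norm_nonneg _).trans (hC 0)
  have hint : Integrable (fun t : ℝ =>
      Real.exp (2 * ((‖a₀‖ + 1) + 1) ^ 2 + (‖a₀‖ + 1) ^ 2 + 2 * (‖a₀‖ + 1)) *
        Real.exp (-(1 / 2) * t ^ 2) * C) :=
    ((integrable_exp_neg_mul_sq (b := 1 / 2) (by norm_num)).const_mul _).mul_const C
  have := hasDerivAt_integral_of_dominated_loc_of_deriv_le (𝕜 := ℂ) (μ := volume)
    (F := fun a t => gk a t • g t) (F' := fun a t => (2 * ((t : ℂ) - a) * gk a t) • g t)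
    (x₀ := a₀) (s := Metric.ball a₀ 1) (Metric.ball_mem_nhds a₀ one_pos)
    (Eventually.of_forall fun a => ((gk_cont a).smul hg).aestronglyMeasurable)
    (gk_smul_int a₀ hg hC)
    (by
      have : Continuous fun t : ℝ => (2 * ((t : ℂ) - a₀) * gk a₀ t) • g t := by
        have := gk_cont a₀
        fun_prop
      exact this.aestronglyMeasurable)
    (Eventually.of_forall fun t a ha => by
      have ha' : ‖a‖ ≤ ‖a₀‖ + 1 := by
        have h1 : ‖a - a₀‖ < 1 := by simpa [dist_eq_norm] using ha
        have h2 : ‖a‖ ≤ ‖a₀‖ + ‖a - a₀‖ := by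
          simpa using norm_add_le a₀ (a - a₀)
        linarith
      rw [norm_smul]
      exact mul_le_mul (gk_deriv_bound _ a ha' t) (hC t) (norm_nonneg _) (by positivity))
    hint
    (Eventually.of_forall fun t a _ => (gk_deriv a t).smul_const (g t))
  exact this.2.differentiableAt

variable (N : GradedVN H)

lemma U_joint {g : ℝ → H} {s : ℝ → ℝ} (hs : Continuous s) (hg : Continuous g) :
    Continuous fun t => N.U (s t) (g t) := by
  rw [continuous_iff_continuousAt]
  intro t₀
  have h1 : Tendsto (fun t => N.U (s t) (g t - g t₀)) (𝓝 t₀) (𝓝 0) := by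
    rw [tendsto_zero_iff_norm_tendsto_zero]
    simp only [LinearIsometryEquiv.norm_map]
    have : Tendsto (fun t => g t - g t₀) (𝓝 t₀) (𝓝 (g t₀ - g t₀)) :=
      (hg.tendsto t₀).sub_const _
    rw [sub_self] at this
    exact tendsto_zero_iff_norm_tendsto_zero.1 this
  have h2 : Tendsto (fun t => N.U (s t) (g t₀)) (𝓝 t₀) (𝓝 (N.U (s t₀) (g t₀))) :=
    ((N.U_cont (g t₀)).comp hs).tendsto t₀
  have h3 := h1.add h2
  rw [zero_add] at h3
  refine h3.congr fun t => ?_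
  rw [← map_add]; simp

lemma U_neg_cancel (t : ℝ) (ξ : H) : N.U (-t) (N.U t ξ) = ξ := by
  rw [← N.U_add]; simp [N.U_zero]

lemma U_cancel_neg (t : ℝ) (ξ : H) : N.U t (N.U (-t) ξ) = ξ := by
  rw [← N.U_add]; simp [N.U_zero]

/-- the integrand -/
def flowv (c : ℝ) (x : H →L[ℂ] H) (ξ : H) (t : ℝ) : H :=
  N.U (c * t) (x (N.U (-(c * t)) ξ))

lemma flowv_cont (c : ℝ) (x : H →L[ℂ] H) (ξ : H) : Continuous (N.flowv c x ξ) := by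
  have h1 : Continuous fun t : ℝ => N.U (-(c * t)) ξ :=
    (N.U_cont ξ).comp (by fun_prop)
  exact N.U_joint (by fun_prop) (x.continuous.comp h1)

lemma flowv_norm (c : ℝ) (x : H →L[ℂ] H) (ξ : H) (t : ℝ) :
    ‖N.flowv c x ξ t‖ ≤ ‖x‖ * ‖ξ‖ := by
  unfold flowv
  rw [LinearIsometryEquiv.norm_map]
  simpa using x.le_opNorm (N.U (-(c * t)) ξ)

lemma flowv_int (c : ℝ) (x : H →L[ℂ] H) (a : ℂ) (ξ : H) :
    Integrable (fun t => gk a t • N.flowv c x ξ t) :=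
  gk_smul_int a (N.flowv_cont c x ξ) (N.flowv_norm c x ξ)

/-- smoothing of `x` -/
def sm (c : ℝ) (x : H →L[ℂ] H) (a : ℂ) : H →L[ℂ] H :=
  LinearMap.mkContinuous
    { toFun := fun ξ => ∫ t, gk a t • N.flowv c x ξ t
      map_add' := fun ξ η => by
        rw [← integral_add (N.flowv_int c x a ξ) (N.flowv_int c x a η)]
        congr 1; ext t
        simp [flowv]
      map_smul' := fun r ξ => by
        rw [RingHom.id_apply, ← integral_smul]
        congr 1; ext t
        simp [flowv, smul_comm r] }
    ((∫ t, ‖gk a t‖) * ‖x‖) (fun ξ => by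
      refine (norm_integral_le_integral_norm _).trans ?_
      rw [mul_assoc, ← integral_mul_const]
      refine integral_mono (N.flowv_int c x a ξ).norm ((gk_int a).norm.mul_const _) fun t => ?_
      simp only [norm_smul]
      exact mul_le_mul_of_nonneg_left (N.flowv_norm c x ξ t) (norm_nonneg _))

lemma sm_apply (c : ℝ) (x : H →L[ℂ] H) (a : ℂ) (ξ : H) :
    N.sm c x a ξ = ∫ t, gk a t • N.flowv c x ξ t := rfl

lemma sm_commute (c : ℝ) (x : H →L[ℂ] H) (a : ℂ) (y : H →L[ℂ] H)
    (h : ∀ t ξ, y (N.flowv c x ξ t) = N.flowv c x (y ξ) t) :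
    y * N.sm c x a = N.sm c x a * y := by
  ext ξ
  simp only [ContinuousLinearMap.mul_apply, sm_apply]
  rw [← ContinuousLinearMap.integral_comp_comm y (N.flowv_int c x a ξ)]
  congr 1; ext t
  rw [map_smul, h]

lemma sm_mem (c : ℝ) {x : H →L[ℂ] H} (hx : x ∈ N.M) (a : ℂ) : N.sm c x a ∈ N.M := by
  rw [← N.M.commutant_commutant, VonNeumannAlgebra.mem_commutant_iff]
  intro y hy
  rw [VonNeumannAlgebra.mem_commutant_iff] at hy
  refine N.sm_commute c x a y fun t ξ => ?_
  obtain ⟨w, hw, hw'⟩ := N.flow_mem (c * t) x hx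
  have := congrArg (fun T : H →L[ℂ] H => T ξ) (hy w hw)
  simp only [ContinuousLinearMap.mul_apply, hw'] at this
  exact this.symm

lemma sm_center (c : ℝ) {x : H →L[ℂ] H} (hx : x ∈ N.centerSet) (a : ℂ) :
    N.sm c x a ∈ N.centerSet := by
  refine ⟨N.sm_mem c hx.1 a, fun y hy => (N.sm_commute c x a y fun t ξ => ?_).symm⟩
  obtain ⟨w, hw, hw'⟩ := N.flow_mem (-(c * t)) y hy
  have := congrArg (fun T : H →L[ℂ] H => N.U (c * t) (T (N.U (-(c * t)) ξ))) (hx.2 w hw)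
  simp only [ContinuousLinearMap.mul_apply, hw', neg_neg, U_cancel_neg] at this
  exact this.symm

lemma flowv_Ω (c : ℝ) (x : H →L[ℂ] H) (t : ℝ) :
    N.flowv c x N.Ω t = N.U (c * t) (x N.Ω) := by
  simp [flowv, N.U_Ω]

lemma sm_shift {c : ℝ} (hc : c ≠ 0) (x : H →L[ℂ] H) (a : ℂ) (s : ℝ) :
    N.U s (N.sm c x a N.Ω) = N.sm c x (a + (s / c : ℝ)) N.Ω := by
  simp only [sm_apply]
  have h := ContinuousLinearMap.integral_comp_comm
    ((N.U s).toContinuousLinearEquiv : H →L[ℂ] H) (N.flowv_int c x a N.Ω)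
  rw [← integral_sub_right_eq_self (fun t => gk (a + (s / c : ℝ)) t • N.flowv c x N.Ω t) (-(s / c))]
  refine Eq.trans h.symm ?_
  congr 1; ext t
  simp only [flowv_Ω, map_smul]
  congr 1
  · simp only [gk]; push_cast; ring_nf
  · change N.U s _ = _
    rw [← N.U_add]
    congr 2
    field_simp; ring

lemma sm_diff (c : ℝ) (x : H →L[ℂ] H) : Differentiable ℂ fun a => N.sm c x a N.Ω :=
  gk_differentiable (N.flowv_cont c x N.Ω) (N.flowv_norm c x N.Ω)

lemma sm_S {c : ℝ} (hc : c ≠ 0) {x : H →L[ℂ] H} (hx : x ∈ N.M) (a : ℂ) :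
    N.J (N.sm c x (a + (-(Complex.I) / 2) / c) N.Ω) = star (N.sm c x a) N.Ω := by
  refine N.S_cond _ (N.sm_mem c hx a) (fun w => N.sm c x (a + w / c) N.Ω) ?_ ?_
  · exact (N.sm_diff c x).comp (by fun_prop)
  · intro t
    rw [N.sm_shift hc]
    simp

lemma sm_const {c : ℝ} (hc : c ≠ 0) (x : H →L[ℂ] H) {T : ℝ} (hT : T ≠ 0)
    (hper : ∀ a, N.sm c x (a + T * Complex.I) N.Ω = N.sm c x a N.Ω) (a b : ℂ) :
    N.sm c x a N.Ω = N.sm c x b N.Ω := by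
  refine (N.sm_diff c x).apply_eq_apply_of_bounded ?_ a b
  have hp : Function.Periodic (fun y : ℝ => N.sm c x (y * Complex.I) N.Ω) T := by
    intro y
    have := hper (y * Complex.I)
    simp only
    rw [← this]; congr 3; push_cast; ring
  have hb := hp.isBounded_of_continuous hT
    ((N.sm_diff c x).continuous.comp (by fun_prop : Continuous fun y : ℝ => (y : ℂ) * Complex.I))
  obtain ⟨C, hC⟩ := hb.exists_norm_le
  refine isBounded_iff_forall_norm_le.2 ⟨C, ?_⟩
  rintro _ ⟨w, rfl⟩
  have h1 := N.sm_shift hc x (w.im * Complex.I) (w.re * c)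
  have h2 : (w.im * Complex.I + ((w.re * c / c : ℝ) : ℂ)) = w := by
    rw [mul_div_cancel_right₀ _ hc, add_comm, Complex.re_add_im]
  rw [h2] at h1
  simp only
  rw [← h1, LinearIsometryEquiv.norm_map]
  exact hC _ ⟨w.im, rfl⟩

lemma flow_of_sm {x : H →L[ℂ] H} (hx : x ∈ N.M)
    (h : ∀ c : ℝ, 0 < c → ∀ a b, N.sm c x a N.Ω = N.sm c x b N.Ω) : x ∈ N.flowFixed := by
  have hlim : Tendsto (fun n : ℕ => N.sm (1 / ((n : ℝ) + 1)) x 0 N.Ω) atTop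
      (𝓝 (∫ t, gk 0 t • x N.Ω)) := by
    refine tendsto_integral_of_dominated_convergence (fun t => ‖gk 0 t‖ * (‖x‖ * ‖N.Ω‖))
      (fun n => (N.flowv_int _ x 0 N.Ω).aestronglyMeasurable) ((gk_int 0).norm.mul_const _)
      (fun n => Eventually.of_forall fun t => ?_) (Eventually.of_forall fun t => ?_)
    · rw [norm_smul]
      exact mul_le_mul_of_nonneg_left (N.flowv_norm _ x N.Ω t) (norm_nonneg _)
    · simp only [flowv_Ω]
      refine Tendsto.const_smul ?_ _
      have h1 : Tendsto (fun n : ℕ => 1 / ((n : ℝ) + 1) * t) atTop (𝓝 0) := by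
        simpa using (tendsto_one_div_add_atTop_nhds_zero_nat (𝕜 := ℝ)).mul_const t
      have h2 := ((N.U_cont (x N.Ω)).tendsto 0).comp h1
      rw [N.U_zero] at h2
      exact h2
  rw [integral_smul_const] at hlim
  have hne : (∫ t, gk 0 t) ≠ 0 := by
    have : (∫ t, gk 0 t) = ((√(Real.pi / 1) : ℝ) : ℂ) := by
      rw [← integral_gaussian 1, ← integral_complex_ofReal]
      congr 1; ext t; simp [gk]
    rw [this]
    simp [Real.pi_pos.le, Real.pi_ne_zero]
  have hfix : ∀ s, N.U s (x N.Ω) = x N.Ω := by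
    intro s
    have h1 := ((N.U s).continuous.tendsto _).comp hlim
    have h2 := tendsto_nhds_unique (h1.congr fun n => by
      have hpos : (0 : ℝ) < 1 / ((n : ℝ) + 1) := by positivity
      simp only [Function.comp]
      rw [N.sm_shift hpos.ne']
      exact h _ hpos _ 0) hlim
    rw [map_smul] at h2
    exact smul_right_injective H hne h2
  refine ⟨hx, fun t ξ => ?_⟩
  obtain ⟨y, hy, hy'⟩ := N.flow_mem t x hx
  have h0 : y - x = 0 := N.separating _ (sub_mem hy hx) (by
    simp [hy', N.U_Ω, hfix])
  have := hy' (N.U t ξ)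
  rw [sub_eq_zero.1 h0, U_neg_cancel] at this
  exact this

lemma J_symm (ξ η : H) : ⟪N.J ξ, η⟫_ℂ = ⟪N.J η, ξ⟫_ℂ := by
  have := N.J_inner ξ (N.J η)
  rwa [N.J_invol] at this

lemma flow_of_J {x : H →L[ℂ] H} (hx : x ∈ N.M) (hJ : N.J (x N.Ω) = star x N.Ω) :
    x ∈ N.flowFixed := by
  refine N.flow_of_sm hx fun c hc => ?_
  have key : ∀ a, N.J (N.sm c x a N.Ω) = star (N.sm c x a) N.Ω := by
    intro a
    refine ext_inner_right ℂ fun v => ?_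
    rw [N.J_symm, ContinuousLinearMap.star_eq_adjoint, ContinuousLinearMap.adjoint_inner_left]
    simp only [sm_apply]
    rw [← integral_inner (N.flowv_int c x a N.Ω), ← integral_inner (N.flowv_int c x a v)]
    congr 1; ext t
    rw [inner_smul_right, inner_smul_right]
    congr 1
    have e1 : ⟪N.Ω, N.flowv c x v t⟫_ℂ = ⟪N.Ω, x (N.U (-(c * t)) v)⟫_ℂ := by
      have := (N.U (c * t)).inner_map_map N.Ω (x (N.U (-(c * t)) v))
      rwa [N.U_Ω] at this
    have e2 : ⟪N.J v, N.flowv c x N.Ω t⟫_ℂ = ⟪N.U (-(c * t)) (N.J v), x N.Ω⟫_ℂ := by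
      have := (N.U (-(c * t))).inner_map_map (N.J v) (N.flowv c x N.Ω t)
      rw [← this, flowv_Ω, U_neg_cancel]
    rw [e1, e2, ← N.J_U, ← N.J_symm, hJ, ContinuousLinearMap.star_eq_adjoint,
      ContinuousLinearMap.adjoint_inner_left]
  refine N.sm_const hc.ne' x (T := -(1 / (2 * c))) (by
    have := hc.ne'
    simp [this]) fun a => ?_
  have h1 := N.sm_S hc.ne' hx a
  rw [← key] at h1
  have h2 := congrArg N.J h1
  rw [N.J_invol, N.J_invol] at h2
  rw [← h2]
  congr 2
  push_cast
  ring

lemma center_op {z k : H →L[ℂ] H} (hz : z ∈ N.M) (hk : k ∈ N.centerSet)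
    (h : N.J (k N.Ω) = star z N.Ω) (ξ : H) : N.J (star z (N.J ξ)) = k ξ := by
  have hJc : Continuous N.J := by
    have : Isometry N.J := by
      refine Isometry.of_dist_eq fun u v => ?_
      have hs : N.J u - N.J v = N.J (u - v) := by
        have hn := N.J_smul (-1) v
        have ha := N.J_add u ((-1 : ℂ) • v)
        rw [hn] at ha
        simp only [map_neg, map_one, neg_smul, one_smul, ← sub_eq_add_neg] at ha
        exact ha.symm
      rw [dist_eq_norm, dist_eq_norm, hs, @norm_eq_sqrt_re_inner ℂ, @norm_eq_sqrt_re_inner ℂ,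
        N.J_inner]
    exact this.continuous
  have : (fun ξ => N.J (star z (N.J ξ))) = fun ξ => k ξ := by
    refine Continuous.ext_on N.cyclic (by fun_prop) (by fun_prop) ?_
    rintro _ ⟨y, hy, rfl⟩
    have h1 := N.tomita (star z) (star_mem hz) y hy N.Ω
    have h2 := congrArg (fun T : H →L[ℂ] H => T N.Ω) (hk.2 y hy)
    simp only [ContinuousLinearMap.mul_apply] at h2
    simp only
    rw [h1, h2, N.J_Ω, ← h, N.J_invol]
  exact congrFun this ξ

lemma star_center {z : H →L[ℂ] H} (hz : z ∈ N.centerSet) : star z ∈ N.centerSet := by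
  refine ⟨star_mem hz.1, fun y hy => ?_⟩
  have := congrArg star (hz.2 (star y) (star_mem hy))
  simpa using this.symm

lemma adj_J {x k : H →L[ℂ] H} (h : ∀ ξ, N.J (star x (N.J ξ)) = k ξ) (ξ : H) :
    N.J (x (N.J ξ)) = star k ξ := by
  refine ext_inner_right ℂ fun v => ?_
  rw [ContinuousLinearMap.star_eq_adjoint, ContinuousLinearMap.adjoint_inner_left, ← h,
    N.J_symm, ← ContinuousLinearMap.adjoint_inner_left, ← ContinuousLinearMap.star_eq_adjoint,
    ← N.J_inner, N.J_invol]

lemma center_flow {z : H →L[ℂ] H} (hz : z ∈ N.centerSet) : z ∈ N.flowFixed := by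
  refine N.flow_of_sm hz.1 fun c hc => ?_
  refine N.sm_const hc.ne' z (T := -(1 / c)) (by simp [hc.ne']) fun a => ?_
  have h1 := N.center_op (N.sm_mem c hz.1 a) (N.sm_center c hz _) (N.sm_S hc.ne' hz.1 a)
  have h2 := N.adj_J h1 N.Ω
  rw [← N.sm_S hc.ne' hz.1, N.J_Ω] at h2
  have h3 := congrArg N.J h2
  rw [N.J_invol, N.J_invol] at h3
  rw [h3]
  congr 2
  push_cast
  ring

lemma center_J {z : H →L[ℂ] H} (hz : z ∈ N.centerSet) (ξ : H) :
    N.J (star z (N.J ξ)) = z ξ := by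
  refine N.center_op hz.1 hz ?_ ξ
  refine N.S_cond z hz.1 (fun _ => z N.Ω) (by fun_prop) fun t => ?_
  have := (N.center_flow hz).2 t N.Ω
  rwa [N.U_Ω] at this

lemma tc_comm {x : H →L[ℂ] H} (hx : x ∈ N.twistedCenter) {y : H →L[ℂ] H} (hy : y ∈ N.M) (ξ : H) :
    x (y ξ) = N.V (y (N.V (x ξ))) := by
  obtain ⟨w, hw, hw'⟩ := N.V_mem y hy
  have h := N.tomita (star x) (star_mem hx.1) w hw (N.V ξ)
  rw [hx.2, hx.2, hw', hw', N.V_invol, N.V_invol] at h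
  exact h

lemma tc_J {x : H →L[ℂ] H} (hx : x ∈ N.twistedCenter) : N.J (x N.Ω) = star x N.Ω := by
  have h := hx.2 N.Ω
  rw [N.J_Ω, N.V_Ω] at h
  rw [← h, N.J_invol]

lemma tc_gamma {x : H →L[ℂ] H} (hx : x ∈ N.twistedCenter) : x ∈ N.gammaFixed := by
  have h1 := N.adj_J (x := x) (k := x * N.V) (fun ξ => hx.2 ξ) N.Ω
  rw [N.J_Ω, N.tc_J hx, star_mul, N.V_star] at h1
  obtain ⟨w, hw, hw'⟩ := N.V_mem (star x) (star_mem hx.1)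
  have h0 : w - star x = 0 := N.separating _ (sub_mem hw (star_mem hx.1)) (by
    rw [ContinuousLinearMap.sub_apply, hw', N.V_Ω, sub_eq_zero]
    exact h1.symm)
  have h2 : star x = N.V * star x * N.V := by
    ext ξ
    rw [← sub_eq_zero.1 h0, hw' ξ, sub_eq_zero.1 h0]
    rfl
  have h3 := congrArg star h2
  simp only [star_mul, star_star, N.V_star] at h3
  refine ⟨hx.1, fun ξ => ?_⟩
  conv_rhs => rw [h3]
  rfl

end GradedVN

/-- Basic properties of the twisted center `Z(M, V)` of a graded von
Neumann algebra: (i) `Z(M,V) ⊆ M^γ ∩ M^α`; (ii) every `x ∈ Z(M,V)` satisfies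
`x y = (V y V) x` for `y ∈ M`; (iii) products of two elements of `Z(M,V)` lie in the
`Ad_V`-invariant part of the center; (iv) `Z(M,V)` absorbs the center:
`x z = z x ∈ Z(M,V)` for `x ∈ Z(M,V)`, `z ∈ Z(M)`. -/
theorem twisted_center_properties {H : Type*} [NormedAddCommGroup H]
    [InnerProductSpace ℂ H] [CompleteSpace H] (N : GradedVN H) :
    (N.twistedCenter ⊆ N.gammaFixed ∩ N.flowFixed) ∧
    (∀ x ∈ N.twistedCenter, ∀ y ∈ N.M, x * y = N.V * y * N.V * x) ∧
    (∀ x₁ ∈ N.twistedCenter, ∀ x₂ ∈ N.twistedCenter,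
      x₁ * x₂ ∈ N.centerSet ∩ N.gammaFixed) ∧
    (∀ x ∈ N.twistedCenter, ∀ z ∈ N.centerSet,
      x * z = z * x ∧ x * z ∈ N.twistedCenter) := by
  refine ⟨fun x hx => ⟨N.tc_gamma hx, N.flow_of_J hx.1 (N.tc_J hx)⟩, fun x hx y hy => ?_,
    fun x₁ h₁ x₂ h₂ => ⟨⟨mul_mem h₁.1 h₂.1, fun y hy => ?_⟩, mul_mem h₁.1 h₂.1, fun ξ => ?_⟩,
    fun x hx z hz => ⟨(hz.2 x hx.1).symm, mul_mem hx.1 hz.1, fun ξ => ?_⟩⟩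
  · ext ξ
    exact N.tc_comm hx hy ξ
  · ext ξ
    obtain ⟨w, hw, hw'⟩ := N.V_mem y hy
    change x₁ (x₂ (y ξ)) = y (x₁ (x₂ ξ))
    rw [N.tc_comm h₂ hy, ← hw', N.tc_comm h₁ hw, hw', N.V_invol, N.V_invol]
  · change N.V (x₁ (x₂ (N.V ξ))) = x₁ (x₂ ξ)
    rw [← (N.tc_gamma h₁).2 (x₂ ξ), ← (N.tc_gamma h₂).2 ξ, N.V_invol]
  · rw [← hz.2 x hx.1, star_mul]
    change N.J (star x (star z (N.J ξ))) = z (x (N.V ξ))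
    have h1 := N.center_J hz ξ
    have h2 := hx.2 (N.J (star z (N.J ξ)))
    have h3 := N.center_J hz (N.J (star x (N.J ξ)))
    rw [N.J_invol] at h3 h2
    rw [← hx.2 ξ, ← h3]
    have h4 := congrArg (fun T : H →L[ℂ] H => T (N.J ξ)) ((N.star_center hz).2 _ (star_mem hx.1))
    exact congrArg N.J h4.symm

end
end
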